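/- arXiv:2310.11694 — 2 statements merged into one kernel-verified Lean document; each statement's English description precedes it below -/
import Mathlib

section
/- There exist constants ε₀, ν₀ ∈ (0,1) and C > 0, independent of ν, k, λ and ε, such that for every 0 < ν ≤ ν₀, every 0 < ε ≤ ε₀, every k = (k₁,k₃) ∈ ℤ² with |k₁| ≥ 1, every λ ∈ ℝ, every F ∈ L²(I), and every solution w ∈ H¹(I) of the ε-modified Orr–Sommerfeld problem with Navier-slip boundary conditions and right-hand side F, one has ν‖w'‖_{L²} + ν^{3/4}|k₁|^{1/4}‖w‖_{L²} ≤ C ‖F‖_{H⁻¹_k}. -/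
open Real MeasureTheory

noncomputable section

/-- `|k| = sqrt (k₁² + k₃²)` for `k = (k₁,k₃) ∈ ℤ²`. -/
def kabs (k₁ k₃ : ℤ) : ℝ := Real.sqrt ((k₁ : ℝ) ^ 2 + (k₃ : ℝ) ^ 2)

/-- The `L²` norm on the interval `(-1,1)`. -/
def l2 (f : ℝ → ℂ) : ℝ := Real.sqrt (∫ y in (-1:ℝ)..1, ‖f y‖ ^ 2)

/-- `‖g‖_{H¹_k} = (‖g'‖² + |k|²‖g‖²)^{1/2}`. -/
def hk (k₁ k₃ : ℤ) (f : ℝ → ℂ) : ℝ :=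
  Real.sqrt ((∫ y in (-1:ℝ)..1, ‖deriv f y‖ ^ 2) +
    (kabs k₁ k₃) ^ 2 * ∫ y in (-1:ℝ)..1, ‖f y‖ ^ 2)

/-- The dual norm `‖F‖_{H⁻¹_k} = sup { |∫ F ḡ| : g ∈ H¹₀, ‖g‖_{H¹_k} ≤ 1 }`. -/
def hm1 (k₁ k₃ : ℤ) (F : ℝ → ℂ) : ℝ :=
  sSup { r : ℝ | ∃ g : ℝ → ℂ, ContDiff ℝ 1 g ∧ g (-1) = 0 ∧ g 1 = 0 ∧
      hk k₁ k₃ g ≤ 1 ∧ r = ‖∫ y in (-1:ℝ)..1, F y * (starRingEnd ℂ) (g y)‖ }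

/-- The `ε`-modified Orr–Sommerfeld problem with Navier-slip boundary
conditions: `-ν(∂_y²-|k|²)w + ik₁[(1-y²-λ)w + 2φ] - ε(ν|k₁|)^{1/2}w = F`
on `[-1,1]`, with `(∂_y²-|k|²)φ = w`, `φ(±1) = φ''(±1) = 0`. -/
def OSslipE (ν : ℝ) (k₁ k₃ : ℤ) (lam : ℂ) (ε : ℝ) (w φ F : ℝ → ℂ) : Prop :=
  ContDiff ℝ 2 w ∧ ContDiff ℝ 2 φ ∧
  (∀ y ∈ Set.Icc (-1:ℝ) 1,
    -(ν : ℂ) * (deriv (deriv w) y - ((kabs k₁ k₃ : ℝ) : ℂ) ^ 2 * w y) +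
      Complex.I * (k₁ : ℂ) * ((1 - (y : ℂ) ^ 2 - lam) * w y + 2 * φ y) -
      ((ε * Real.sqrt (ν * |(k₁ : ℝ)|) : ℝ) : ℂ) * w y = F y) ∧
  (∀ y ∈ Set.Icc (-1:ℝ) 1,
    deriv (deriv φ) y - ((kabs k₁ k₃ : ℝ) : ℂ) ^ 2 * φ y = w y) ∧
  φ (-1) = 0 ∧ φ 1 = 0 ∧ deriv (deriv φ) (-1) = 0 ∧ deriv (deriv φ) 1 = 0

/-!
Let `L` be the operator without the `ε`-term and `δ = (ν / |k₁|)^{1/4}` the width of the critical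
layer. If `‖Lw‖ ≪ (ν|k₁|)^{1/2}‖w‖`, the energy identity makes the dissipation `ν‖w'‖²` small, and
the Hardy-type inequality `‖w‖² ≤ 2‖yw‖‖w'‖` then makes `‖yw‖` large compared with `δ‖w‖`. For
`1 - λ ≤ δ²` this contradicts the smallness of `Im ⟨Lw, w⟩`, to which the shear contributes
`(1 - λ)‖w‖² - ‖yw‖²` and the nonlocal term `-2‖φ‖²_{H¹_k}`. For `1 - λ > δ²` it contradicts the
coercivity, in `‖yw‖² + ‖φ‖²_{H¹_k}`, of the pairing of the transport term with a dilation
multiplier `β w' + γ w`, localised to `|y| ≲ (1 - λ)^{1/2}` when `1 - λ` is small. Hence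
`‖Lw‖ ≳ (ν|k₁|)^{1/2}‖w‖`, and the `ε`-term takes away at most half of this lower bound.

By this estimate the adjoint problem (`k₁` replaced by `-k₁`) is uniquely solvable, being a
two-point boundary value problem for a linear system. Let `v` solve it with right-hand side `w`.
Then `‖w‖² = Re ⟨F, v⟩`, and `‖v‖_{H¹_k}` is controlled by the energy identity and the `L²` bound
for `v`. This bounds `‖w‖` by `‖F‖_{H⁻¹_k}`, and the energy identity for `w` bounds `‖w'‖`.
-/

section L2

variable {f g h : ℝ → ℂ}

/-- The real part `Re ∫ f ḡ` of the inner product of `L²(-1,1)`. Its real form is the one that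
integration by parts and the library's real inner products on `ℂ` produce; the imaginary part is
recovered by multiplying an argument by `I`. -/
def l2Inner (f g : ℝ → ℂ) : ℝ := ∫ y in (-1 : ℝ)..1, inner ℝ (f y) (g y)

lemma l2_nonneg (f : ℝ → ℂ) : 0 ≤ l2 f := Real.sqrt_nonneg _

lemma l2_sq (f : ℝ → ℂ) : l2 f ^ 2 = ∫ y in (-1 : ℝ)..1, ‖f y‖ ^ 2 :=
  Real.sq_sqrt (intervalIntegral.integral_nonneg (by norm_num) fun _ _ => by positivity)

lemma l2Inner_self (f : ℝ → ℂ) : l2Inner f f = l2 f ^ 2 := by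
  simp only [l2Inner, l2_sq, real_inner_self_eq_norm_sq]

lemma l2Inner_comm (f g : ℝ → ℂ) : l2Inner f g = l2Inner g f := by
  simp only [l2Inner, real_inner_comm]

lemma integral_congr_Icc {E : Type*} [NormedAddCommGroup E] [NormedSpace ℝ E] {f g : ℝ → E}
    {a b : ℝ} (hab : a ≤ b) (h : Set.EqOn f g (Set.Icc a b)) :
    ∫ y in a..b, f y = ∫ y in a..b, g y :=
  intervalIntegral.integral_congr (by rwa [Set.uIcc_of_le hab])

lemma l2_congr (h : Set.EqOn f g (Set.Icc (-1) 1)) : l2 f = l2 g := by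
  rw [l2, l2, integral_congr_Icc (by norm_num) fun y hy => by rw [h hy]]

lemma l2Inner_congr_left (h : Set.EqOn f g (Set.Icc (-1) 1)) (u : ℝ → ℂ) :
    l2Inner f u = l2Inner g u :=
  integral_congr_Icc (by norm_num) fun y hy => by simp only [h hy]

lemma l2Inner_congr_right (u : ℝ → ℂ) (h : Set.EqOn f g (Set.Icc (-1) 1)) :
    l2Inner u f = l2Inner u g := by
  rw [l2Inner_comm, l2Inner_congr_left h, l2Inner_comm]

lemma intervalIntegrable_inner (hf : Continuous f) (hg : Continuous g) (a b : ℝ) :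
    IntervalIntegrable (fun y => inner ℝ (f y) (g y)) volume a b :=
  (hf.inner hg).intervalIntegrable _ _

lemma l2Inner_add_left (hf : Continuous f) (hg : Continuous g) (hh : Continuous h) :
    l2Inner (fun y => f y + g y) h = l2Inner f h + l2Inner g h := by
  simp only [l2Inner, inner_add_left]
  exact intervalIntegral.integral_add (intervalIntegrable_inner hf hh _ _)
    (intervalIntegrable_inner hg hh _ _)

lemma l2Inner_sub_left (hf : Continuous f) (hg : Continuous g) (hh : Continuous h) :
    l2Inner (fun y => f y - g y) h = l2Inner f h - l2Inner g h := by
  simp only [l2Inner, inner_sub_left]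
  exact intervalIntegral.integral_sub (intervalIntegrable_inner hf hh _ _)
    (intervalIntegrable_inner hg hh _ _)

lemma l2Inner_add_right (hf : Continuous f) (hg : Continuous g) (hh : Continuous h) :
    l2Inner f (fun y => g y + h y) = l2Inner f g + l2Inner f h := by
  rw [l2Inner_comm, l2Inner_add_left hg hh hf, l2Inner_comm g, l2Inner_comm h]

lemma l2Inner_sub_right (hf : Continuous f) (hg : Continuous g) (hh : Continuous h) :
    l2Inner f (fun y => g y - h y) = l2Inner f g - l2Inner f h := by
  rw [l2Inner_comm, l2Inner_sub_left hg hh hf, l2Inner_comm g, l2Inner_comm h]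

lemma l2Inner_smul_left (c : ℝ) (f g : ℝ → ℂ) :
    l2Inner (fun y => c • f y) g = c * l2Inner f g := by
  simp only [l2Inner, real_inner_smul_left, intervalIntegral.integral_const_mul]

lemma l2Inner_smul_right (c : ℝ) (f g : ℝ → ℂ) :
    l2Inner f (fun y => c • g y) = c * l2Inner f g := by
  rw [l2Inner_comm, l2Inner_smul_left, l2Inner_comm]

lemma l2Inner_neg_left (f g : ℝ → ℂ) : l2Inner (fun y => -f y) g = -l2Inner f g := by
  simp only [l2Inner, inner_neg_left, intervalIntegral.integral_neg]

lemma l2Inner_weight_smul_left (ρ : ℝ → ℝ) (f g : ℝ → ℂ) :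
    l2Inner (fun y => ρ y • f y) g = l2Inner f (fun y => ρ y • g y) := by
  simp only [l2Inner, real_inner_smul_left, real_inner_smul_right]

lemma l2Inner_I_mul_left (f g : ℝ → ℂ) :
    l2Inner (fun y => Complex.I * f y) g = -l2Inner f (fun y => Complex.I * g y) := by
  simp only [l2Inner, ← intervalIntegral.integral_neg]
  congr 1 with y
  simp only [Complex.inner, Complex.mul_re, Complex.mul_im, Complex.conj_re, Complex.conj_im,
    Complex.I_re, Complex.I_im]
  ring

lemma l2Inner_I_mul_weight_self (ρ : ℝ → ℝ) (f : ℝ → ℂ) :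
    l2Inner (fun y => Complex.I * f y) (fun y => ρ y • f y) = 0 := by
  have h := l2Inner_I_mul_left f (fun y => ρ y • f y)
  simp only [mul_smul_comm] at h
  rw [← l2Inner_weight_smul_left ρ f, l2Inner_comm (fun y => ρ y • f y)] at h
  linarith

lemma l2Inner_I_mul_self (f : ℝ → ℂ) : l2Inner (fun y => Complex.I * f y) f = 0 := by
  simpa only [one_smul] using l2Inner_I_mul_weight_self (fun _ => 1) f

lemma l2_smul (c : ℝ) (f : ℝ → ℂ) : l2 (fun y => c • f y) = |c| * l2 f := by
  refine (pow_left_inj₀ (l2_nonneg _) (by have := l2_nonneg f; positivity) two_ne_zero).1 ?_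
  rw [mul_pow, ← l2Inner_self, l2Inner_smul_left, l2Inner_smul_right, l2Inner_self, sq_abs]
  ring

lemma l2_I_mul (f : ℝ → ℂ) : l2 (fun y => Complex.I * f y) = l2 f := by
  simp only [l2, norm_mul, Complex.norm_I, one_mul]

lemma l2_add_sq (hf : Continuous f) (hg : Continuous g) :
    l2 (fun y => f y + g y) ^ 2 = l2 f ^ 2 + 2 * l2Inner f g + l2 g ^ 2 := by
  rw [← l2Inner_self, l2Inner_add_left hf hg (by fun_prop), l2Inner_add_right hf hf hg,
    l2Inner_add_right hg hf hg, l2Inner_self, l2Inner_self, l2Inner_comm g f]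
  ring

lemma l2_sub_sq (hf : Continuous f) (hg : Continuous g) :
    l2 (fun y => f y - g y) ^ 2 = l2 f ^ 2 - 2 * l2Inner f g + l2 g ^ 2 := by
  rw [← l2Inner_self, l2Inner_sub_left hf hg (by fun_prop), l2Inner_sub_right hf hf hg,
    l2Inner_sub_right hg hf hg, l2Inner_self, l2Inner_self, l2Inner_comm g f]
  ring

lemma abs_l2Inner_le (hf : Continuous f) (hg : Continuous g) :
    |l2Inner f g| ≤ l2 f * l2 g := by
  have nonneg_quadratic (t : ℝ) : 0 ≤ l2 g ^ 2 * (t * t) + 2 * l2Inner f g * t + l2 f ^ 2 := by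
    have h := l2_add_sq (g := fun y => t • g y) hf (by fun_prop)
    rw [l2_smul, l2Inner_smul_right, mul_pow, sq_abs] at h
    nlinarith [sq_nonneg (l2 fun y => f y + t • g y)]
  have h := discrim_le_zero nonneg_quadratic
  rw [discrim] at h
  exact abs_le_of_sq_le_sq (by nlinarith) (mul_nonneg (l2_nonneg _) (l2_nonneg _))

lemma l2Inner_le (hf : Continuous f) (hg : Continuous g) : l2Inner f g ≤ l2 f * l2 g :=
  (le_abs_self _).trans (abs_l2Inner_le hf hg)

lemma neg_l2Inner_le (hf : Continuous f) (hg : Continuous g) : -l2Inner f g ≤ l2 f * l2 g :=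
  (neg_le_abs _).trans (abs_l2Inner_le hf hg)

lemma l2_add_le (hf : Continuous f) (hg : Continuous g) :
    l2 (fun y => f y + g y) ≤ l2 f + l2 g := by
  refine le_of_sq_le_sq ?_ (add_nonneg (l2_nonneg _) (l2_nonneg _))
  rw [l2_add_sq hf hg]
  nlinarith [l2Inner_le hf hg]

lemma l2Inner_weight_self_mono {ρ σ : ℝ → ℝ} (hρ : Continuous ρ) (hσ : Continuous σ)
    (hf : Continuous f) (h : ∀ y ∈ Set.Icc (-1 : ℝ) 1, ρ y ≤ σ y) :
    l2Inner (fun y => ρ y • f y) f ≤ l2Inner (fun y => σ y • f y) f :=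
  intervalIntegral.integral_mono_on (by norm_num)
    (intervalIntegrable_inner (by fun_prop) hf _ _) (intervalIntegrable_inner (by fun_prop) hf _ _)
    fun y hy => by
      rw [real_inner_smul_left, real_inner_smul_left, real_inner_self_eq_norm_sq]
      exact mul_le_mul_of_nonneg_right (h y hy) (by positivity)

lemma l2_weight_smul_sq (ρ : ℝ → ℝ) (f : ℝ → ℂ) :
    l2 (fun y => ρ y • f y) ^ 2 = l2Inner (fun y => (ρ y ^ 2) • f y) f := by
  rw [← l2Inner_self, l2Inner_weight_smul_left, l2Inner_comm]
  simp only [smul_smul, sq]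

lemma l2Inner_quadratic_weight_self (a b : ℝ) (hf : Continuous f) :
    l2Inner (fun y => (a - b * y ^ 2) • f y) f =
      a * l2 f ^ 2 - b * l2 (fun y => y • f y) ^ 2 := by
  rw [l2_weight_smul_sq, ← l2Inner_self, ← l2Inner_smul_left, ← l2Inner_smul_left,
    ← l2Inner_sub_left (by fun_prop) (by fun_prop) hf]
  simp only [sub_smul, smul_smul]

lemma l2_weight_smul_le {ρ : ℝ → ℝ} {B : ℝ} (hρ : Continuous ρ) (hf : Continuous f)
    (h : ∀ y ∈ Set.Icc (-1 : ℝ) 1, |ρ y| ≤ B) : l2 (fun y => ρ y • f y) ≤ B * l2 f := by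
  have hB : 0 ≤ B := (abs_nonneg _).trans (h 0 (by norm_num))
  refine le_of_sq_le_sq ?_ (mul_nonneg hB (l2_nonneg _))
  calc l2 (fun y => ρ y • f y) ^ 2 ≤ l2Inner (fun y => (B ^ 2) • f y) f := by
        rw [l2_weight_smul_sq]
        exact l2Inner_weight_self_mono (by fun_prop) (by fun_prop) hf
          fun y hy => sq_le_sq' (by linarith [neg_le_of_abs_le (h y hy)]) (le_of_abs_le (h y hy))
    _ = (B * l2 f) ^ 2 := by rw [l2Inner_smul_left, l2Inner_self, mul_pow]

lemma eqOn_zero_of_l2_eq_zero (hf : Continuous f) (h : l2 f = 0) :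
    Set.EqOn f 0 (Set.Icc (-1) 1) := by
  intro y hy
  by_contra hfy
  rw [Pi.zero_apply] at hfy
  have hpos : 0 < ∫ y in (-1 : ℝ)..1, ‖f y‖ ^ 2 :=
    intervalIntegral.integral_pos (by norm_num) (by fun_prop) (fun _ _ => by positivity)
      ⟨y, hy, by positivity⟩
  rw [← l2_sq, h] at hpos
  norm_num at hpos

end L2

section IntegrationByParts

variable {u u' v v' w : ℝ → ℂ} {β β' : ℝ → ℝ} {K : ℝ}

lemma l2Inner_deriv_left (hu : ∀ y, HasDerivAt u (u' y) y) (hv : ∀ y, HasDerivAt v (v' y) y)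
    (hu' : Continuous u') (hv' : Continuous v')
    (hb : inner ℝ (u 1) (v 1) = inner ℝ (u (-1)) (v (-1))) :
    l2Inner u' v = -l2Inner u v' := by
  have hcu : Continuous u := continuous_iff_continuousAt.2 fun y => (hu y).continuousAt
  have hcv : Continuous v := continuous_iff_continuousAt.2 fun y => (hv y).continuousAt
  have hFTC := intervalIntegral.integral_eq_sub_of_hasDerivAt (a := -1) (b := 1)
    (fun y _ => (hu y).inner ℝ (hv y))
    ((intervalIntegrable_inner hcu hv' _ _).add (intervalIntegrable_inner hu' hcv _ _))
  rw [intervalIntegral.integral_add (intervalIntegrable_inner hcu hv' _ _)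
    (intervalIntegrable_inner hu' hcv _ _), hb, sub_self] at hFTC
  simp only [l2Inner]
  linarith

lemma l2Inner_weight_smul_deriv (hβ : ∀ y, HasDerivAt β (β' y) y) (hβ' : Continuous β')
    (hu : ∀ y, HasDerivAt u (u' y) y) (hv : ∀ y, HasDerivAt v (v' y) y)
    (hu' : Continuous u') (hv' : Continuous v')
    (hb : β 1 * inner ℝ (u 1) (v 1) = β (-1) * inner ℝ (u (-1)) (v (-1))) :
    l2Inner (fun y => β y • u y) v' =
      -(l2Inner (fun y => β' y • u y) v + l2Inner (fun y => β y • u' y) v) := by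
  have hcβ : Continuous β := continuous_iff_continuousAt.2 fun y => (hβ y).continuousAt
  have hcu : Continuous u := continuous_iff_continuousAt.2 fun y => (hu y).continuousAt
  have hcv : Continuous v := continuous_iff_continuousAt.2 fun y => (hv y).continuousAt
  have h := l2Inner_deriv_left (fun y => (hβ y).smul (hu y)) hv (by fun_prop) hv'
    (by simpa only [Pi.smul_apply', real_inner_smul_left] using hb)
  rw [l2Inner_add_left (by fun_prop) (by fun_prop) hcv] at h
  change _ = -l2Inner (fun y => β y • u y) v' at h
  linarith

lemma l2Inner_weight_smul_deriv_self (hβ : ∀ y, HasDerivAt β (β' y) y) (hβ' : Continuous β')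
    (hu : ∀ y, HasDerivAt u (u' y) y) (hu' : Continuous u')
    (hb : β 1 * ‖u 1‖ ^ 2 = β (-1) * ‖u (-1)‖ ^ 2) :
    l2Inner (fun y => β y • u y) u' = -l2Inner (fun y => β' y • u y) u / 2 := by
  have h := l2Inner_weight_smul_deriv hβ hβ' hu hu hu' hu'
    (by simpa only [real_inner_self_eq_norm_sq] using hb)
  rw [l2Inner_weight_smul_left β u' u, l2Inner_comm u'] at h
  linarith

lemma l2_sq_le_two_mul_l2_id_smul_mul_l2_deriv (hu : ContDiff ℝ 1 u) (hl : u (-1) = 0)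
    (hr : u 1 = 0) : l2 u ^ 2 ≤ 2 * (l2 (fun y => y • u y) * l2 (deriv u)) := by
  have hu' := hu.continuous_deriv_one
  have h := l2Inner_weight_smul_deriv_self (β := fun y => y) (β' := fun _ => 1) hasDerivAt_id'
    continuous_const (fun y => (hu.differentiable_one y).hasDerivAt) hu' (by simp [hl, hr])
  simp only [one_smul, l2Inner_self] at h
  linarith [neg_l2Inner_le (f := fun y => y • u y) (by fun_prop) hu']

/-- The operator `∂_y² - K` acting on the Fourier mode with `K = |k|²`. -/
def modalLaplacian (K : ℝ) (w : ℝ → ℂ) (y : ℝ) : ℂ := deriv (deriv w) y - K • w y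

/-- The squared norm `‖f'‖² + K‖f‖²` of the modal Sobolev space, where `K = |k|²`. -/
def energy (K : ℝ) (f : ℝ → ℂ) : ℝ := l2 (deriv f) ^ 2 + K * l2 f ^ 2

lemma energy_nonneg {K : ℝ} (hK : 0 ≤ K) (f : ℝ → ℂ) : 0 ≤ energy K f := by
  unfold energy
  positivity

lemma hasDerivAt_of_contDiff_two (hw : ContDiff ℝ 2 w) (y : ℝ) : HasDerivAt w (deriv w y) y :=
  (hw.differentiable (by norm_num) y).hasDerivAt

lemma contDiff_one_deriv_of_contDiff_two (hw : ContDiff ℝ 2 w) : ContDiff ℝ 1 (deriv w) :=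
  hw.iterate_deriv' 1 1

lemma hasDerivAt_deriv_of_contDiff_two (hw : ContDiff ℝ 2 w) (y : ℝ) :
    HasDerivAt (deriv w) (deriv (deriv w) y) y :=
  ((contDiff_one_deriv_of_contDiff_two hw).differentiable_one y).hasDerivAt

lemma continuous_modalLaplacian (K : ℝ) (hw : ContDiff ℝ 2 w) :
    Continuous (modalLaplacian K w) :=
  (contDiff_one_deriv_of_contDiff_two hw).continuous_deriv_one.sub (hw.continuous.const_smul K)

lemma l2Inner_modalLaplacian_left (hw : ContDiff ℝ 2 w) (hu : ∀ y, HasDerivAt u (u' y) y)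
    (hu' : Continuous u') (hl : u (-1) = 0) (hr : u 1 = 0) :
    l2Inner (modalLaplacian K w) u = -(l2Inner (deriv w) u' + K * l2Inner w u) := by
  have hw' := contDiff_one_deriv_of_contDiff_two hw
  have hcu : Continuous u := continuous_iff_continuousAt.2 fun y => (hu y).continuousAt
  have hexpand : l2Inner (modalLaplacian K w) u =
      l2Inner (deriv (deriv w)) u - K * l2Inner w u := by
    rw [← l2Inner_smul_left, ← l2Inner_sub_left hw'.continuous_deriv_one (by fun_prop) hcu]
    rfl
  rw [hexpand, l2Inner_deriv_left (hasDerivAt_deriv_of_contDiff_two hw) hu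
    hw'.continuous_deriv_one hu' (by simp [hl, hr])]
  ring

lemma l2Inner_modalLaplacian_comm (hv : ContDiff ℝ 2 v) (hw : ContDiff ℝ 2 w)
    (hvl : v (-1) = 0) (hvr : v 1 = 0) (hwl : w (-1) = 0) (hwr : w 1 = 0) :
    l2Inner (modalLaplacian K v) w = l2Inner v (modalLaplacian K w) := by
  rw [l2Inner_modalLaplacian_left hv (hasDerivAt_of_contDiff_two hw)
      (contDiff_one_deriv_of_contDiff_two hw).continuous hwl hwr,
    l2Inner_comm v (modalLaplacian K w),
    l2Inner_modalLaplacian_left hw (hasDerivAt_of_contDiff_two hv)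
      (contDiff_one_deriv_of_contDiff_two hv).continuous hvl hvr, l2Inner_comm w v,
    l2Inner_comm (deriv w)]

lemma l2Inner_modalLaplacian_self (hw : ContDiff ℝ 2 w) (hl : w (-1) = 0) (hr : w 1 = 0) :
    l2Inner (modalLaplacian K w) w = -energy K w := by
  rw [l2Inner_modalLaplacian_left hw (hasDerivAt_of_contDiff_two hw)
    (contDiff_one_deriv_of_contDiff_two hw).continuous hl hr, l2Inner_self, l2Inner_self, energy]

lemma modalLaplacian_const_mul (K : ℝ) (c : ℂ) (w : ℝ → ℂ) (y : ℝ) :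
    modalLaplacian K (fun y => c * w y) y = c * modalLaplacian K w y := by
  simp only [modalLaplacian, deriv_const_mul_field', mul_sub, mul_smul_comm]

end IntegrationByParts

section OrrSommerfeld

variable {K ν : ℝ} {w φ v χ : ℝ → ℂ}

/-- A vorticity mode `w` on `[-1,1]` with its stream function `φ`, subject to the Navier-slip
boundary conditions: they reduce to the vanishing of both functions at `±1`. -/
structure SlipPair (K : ℝ) (w φ : ℝ → ℂ) : Prop where
  contDiff_vorticity : ContDiff ℝ 2 w
  contDiff_stream : ContDiff ℝ 2 φ
  modalLaplacian_stream : Set.EqOn (modalLaplacian K φ) w (Set.Icc (-1) 1)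
  vorticity_neg_one : w (-1) = 0
  vorticity_one : w 1 = 0
  stream_neg_one : φ (-1) = 0
  stream_one : φ 1 = 0

/-- The transport operator `(1 - y² - λ)w + 2φ` of the Poiseuille flow, where `d = 1 - λ`. -/
def rayleigh (d : ℝ) (w φ : ℝ → ℂ) (y : ℝ) : ℂ := (d - y ^ 2) • w y + (2 : ℝ) • φ y

/-- The Orr–Sommerfeld operator `-ν(∂_y² - K)w + iκ((d - y²)w + 2φ)`, without the `ε`-term. -/
def orrSommerfeld (ν κ d K : ℝ) (w φ : ℝ → ℂ) (y : ℝ) : ℂ :=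
  -ν • modalLaplacian K w y + κ • (Complex.I * rayleigh d w φ y)

/-- The `ε`-modified Orr–Sommerfeld operator: the operator above minus `ε(ν|κ|)^{1/2}w`. -/
def modifiedOrrSommerfeld (ν ε κ d K : ℝ) (w φ : ℝ → ℂ) (y : ℝ) : ℂ :=
  orrSommerfeld ν κ d K w φ y - (ε * √(ν * |κ|)) • w y

namespace SlipPair

lemma continuous_rayleigh (S : SlipPair K w φ) (d : ℝ) : Continuous (rayleigh d w φ) := by
  have hw := S.contDiff_vorticity.continuous
  have hφ := S.contDiff_stream.continuous
  unfold rayleigh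
  fun_prop

lemma continuous_orrSommerfeld (S : SlipPair K w φ) (ν κ d : ℝ) :
    Continuous (orrSommerfeld ν κ d K w φ) := by
  have hΔ := continuous_modalLaplacian K S.contDiff_vorticity
  have hR := S.continuous_rayleigh d
  unfold orrSommerfeld
  fun_prop

lemma hasDerivAt_vorticity (S : SlipPair K w φ) (y : ℝ) : HasDerivAt w (deriv w y) y :=
  hasDerivAt_of_contDiff_two S.contDiff_vorticity y

lemma hasDerivAt_stream (S : SlipPair K w φ) (y : ℝ) : HasDerivAt φ (deriv φ y) y :=
  hasDerivAt_of_contDiff_two S.contDiff_stream y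

lemma continuous_deriv_vorticity (S : SlipPair K w φ) : Continuous (deriv w) :=
  (contDiff_one_deriv_of_contDiff_two S.contDiff_vorticity).continuous

lemma continuous_deriv_stream (S : SlipPair K w φ) : Continuous (deriv φ) :=
  (contDiff_one_deriv_of_contDiff_two S.contDiff_stream).continuous

lemma I_mul (S : SlipPair K w φ) :
    SlipPair K (fun y => Complex.I * w y) (fun y => Complex.I * φ y) where
  contDiff_vorticity := contDiff_const.mul S.contDiff_vorticity
  contDiff_stream := contDiff_const.mul S.contDiff_stream
  modalLaplacian_stream y hy := by
    rw [modalLaplacian_const_mul, S.modalLaplacian_stream hy]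
  vorticity_neg_one := by rw [S.vorticity_neg_one, mul_zero]
  vorticity_one := by rw [S.vorticity_one, mul_zero]
  stream_neg_one := by rw [S.stream_neg_one, mul_zero]
  stream_one := by rw [S.stream_one, mul_zero]

lemma l2Inner_stream_vorticity (S : SlipPair K w φ) : l2Inner φ w = -energy K φ := by
  rw [← l2Inner_congr_right φ S.modalLaplacian_stream, l2Inner_comm,
    l2Inner_modalLaplacian_self S.contDiff_stream S.stream_neg_one S.stream_one]

lemma l2Inner_stream_comm (S : SlipPair K w φ) (T : SlipPair K v χ) :
    l2Inner φ v = l2Inner w χ := by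
  rw [← l2Inner_congr_right φ T.modalLaplacian_stream,
    ← l2Inner_modalLaplacian_comm S.contDiff_stream T.contDiff_stream S.stream_neg_one
      S.stream_one T.stream_neg_one T.stream_one, l2Inner_congr_left S.modalLaplacian_stream]

lemma l2Inner_rayleigh_left (S : SlipPair K w φ) (d : ℝ) (hu : Continuous v) :
    l2Inner (rayleigh d w φ) v =
      l2Inner (fun y => (d - y ^ 2) • w y) v + 2 * l2Inner φ v := by
  have hw := S.contDiff_vorticity.continuous
  have hφ := S.contDiff_stream.continuous
  rw [← l2Inner_smul_left, ← l2Inner_add_left (by fun_prop) (by fun_prop) hu]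
  rfl

lemma l2Inner_rayleigh_comm (S : SlipPair K w φ) (T : SlipPair K v χ) (d : ℝ) :
    l2Inner (rayleigh d w φ) v = l2Inner w (rayleigh d v χ) := by
  rw [S.l2Inner_rayleigh_left d T.contDiff_vorticity.continuous, l2Inner_comm w,
    T.l2Inner_rayleigh_left d S.contDiff_vorticity.continuous, l2Inner_weight_smul_left,
    l2Inner_comm w, S.l2Inner_stream_comm T, l2Inner_comm w]

lemma l2Inner_rayleigh_self (S : SlipPair K w φ) (d : ℝ) :
    l2Inner (rayleigh d w φ) w =
      d * l2 w ^ 2 - l2 (fun y => y • w y) ^ 2 - 2 * energy K φ := by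
  have hw := S.contDiff_vorticity.continuous
  have hshear := l2Inner_quadratic_weight_self d 1 hw
  simp only [one_mul] at hshear
  rw [S.l2Inner_rayleigh_left d hw, hshear, S.l2Inner_stream_vorticity]
  ring

lemma rayleigh_I_mul (d : ℝ) (w φ : ℝ → ℂ) :
    rayleigh d (fun y => Complex.I * w y) (fun y => Complex.I * φ y) =
      fun y => Complex.I * rayleigh d w φ y := by
  funext y
  simp only [rayleigh, mul_add, mul_smul_comm]

lemma l2Inner_I_mul_rayleigh_comm (S : SlipPair K w φ) (T : SlipPair K v χ) (d : ℝ) :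
    l2Inner (fun y => Complex.I * rayleigh d w φ y) v =
      -l2Inner w (fun y => Complex.I * rayleigh d v χ y) := by
  rw [l2Inner_I_mul_left, S.l2Inner_rayleigh_comm T.I_mul, rayleigh_I_mul]

lemma l2Inner_I_mul_rayleigh_self (S : SlipPair K w φ) (d : ℝ) :
    l2Inner (fun y => Complex.I * rayleigh d w φ y) w = 0 := by
  have h := S.l2Inner_I_mul_rayleigh_comm S d
  rw [l2Inner_comm w] at h
  linarith

lemma l2Inner_modalLaplacian_I_mul_shear (S : SlipPair K w φ) (d : ℝ) :
    l2Inner (modalLaplacian K (fun y => Complex.I * w y)) (fun y => (d - y ^ 2) • w y) =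
      2 * l2Inner (fun y => Complex.I * deriv w y) (fun y => y • w y) := by
  have hw := S.contDiff_vorticity.continuous
  have hw' := S.continuous_deriv_vorticity
  have hderiv (y : ℝ) : HasDerivAt (fun y => (d - y ^ 2) • w y)
      ((d - y ^ 2) • deriv w y + (-2 : ℝ) • y • w y) y := by
    refine (((hasDerivAt_pow 2 y).const_sub d).smul (S.hasDerivAt_vorticity y)).congr_deriv ?_
    simp [mul_assoc]
  rw [l2Inner_modalLaplacian_left S.I_mul.contDiff_vorticity hderiv (by fun_prop)
      (by simp [S.vorticity_neg_one]) (by simp [S.vorticity_one]), deriv_const_mul_field',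
    l2Inner_add_right (by fun_prop) (by fun_prop) (by fun_prop), l2Inner_smul_right,
    l2Inner_I_mul_weight_self (fun y => d - y ^ 2) w,
    l2Inner_I_mul_weight_self (fun y => d - y ^ 2) (deriv w)]
  ring

lemma l2Inner_I_mul_rayleigh_modalLaplacian (S : SlipPair K w φ) (d : ℝ) :
    l2Inner (fun y => Complex.I * rayleigh d w φ y) (modalLaplacian K w) =
      -2 * l2Inner (fun y => Complex.I * deriv w y) (fun y => y • w y) := by
  have hΔI : modalLaplacian K (fun y => Complex.I * w y) =
      fun y => Complex.I * modalLaplacian K w y := funext (modalLaplacian_const_mul K _ w)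
  have hstream : l2Inner φ (modalLaplacian K fun y => Complex.I * w y) = 0 := by
    rw [← l2Inner_modalLaplacian_comm S.contDiff_stream S.I_mul.contDiff_vorticity
        S.stream_neg_one S.stream_one S.I_mul.vorticity_neg_one S.I_mul.vorticity_one,
      l2Inner_congr_left S.modalLaplacian_stream, l2Inner_comm, l2Inner_I_mul_self]
  rw [l2Inner_I_mul_left, ← hΔI, S.l2Inner_rayleigh_left d
      (continuous_modalLaplacian K S.I_mul.contDiff_vorticity), hstream,
    l2Inner_comm, S.l2Inner_modalLaplacian_I_mul_shear]
  ring

lemma l2Inner_orrSommerfeld_left (S : SlipPair K w φ) (ν κ d : ℝ) (hv : Continuous v) :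
    l2Inner (orrSommerfeld ν κ d K w φ) v = -ν * l2Inner (modalLaplacian K w) v +
      κ * l2Inner (fun y => Complex.I * rayleigh d w φ y) v := by
  have hΔ := continuous_modalLaplacian K S.contDiff_vorticity
  have hR := S.continuous_rayleigh d
  rw [← l2Inner_smul_left, ← l2Inner_smul_left, ← l2Inner_add_left (by fun_prop) (by fun_prop) hv]
  rfl

lemma l2Inner_orrSommerfeld_adjoint (S : SlipPair K w φ) (T : SlipPair K v χ) (ν κ d : ℝ) :
    l2Inner (orrSommerfeld ν κ d K w φ) v = l2Inner w (orrSommerfeld ν (-κ) d K v χ) := by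
  rw [S.l2Inner_orrSommerfeld_left ν κ d T.contDiff_vorticity.continuous, l2Inner_comm w,
    T.l2Inner_orrSommerfeld_left ν (-κ) d S.contDiff_vorticity.continuous,
    l2Inner_modalLaplacian_comm S.contDiff_vorticity T.contDiff_vorticity S.vorticity_neg_one
      S.vorticity_one T.vorticity_neg_one T.vorticity_one,
    S.l2Inner_I_mul_rayleigh_comm T, l2Inner_comm w, l2Inner_comm w]
  ring

lemma l2Inner_orrSommerfeld_self (S : SlipPair K w φ) (ν κ d : ℝ) :
    l2Inner (orrSommerfeld ν κ d K w φ) w = ν * energy K w := by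
  rw [S.l2Inner_orrSommerfeld_left ν κ d S.contDiff_vorticity.continuous,
    S.l2Inner_I_mul_rayleigh_self,
    l2Inner_modalLaplacian_self S.contDiff_vorticity S.vorticity_neg_one S.vorticity_one]
  ring

lemma energy_vorticity_le (S : SlipPair K w φ) (ν κ d : ℝ) :
    ν * energy K w ≤ l2 (orrSommerfeld ν κ d K w φ) * l2 w := by
  rw [← S.l2Inner_orrSommerfeld_self ν κ d]
  exact l2Inner_le (S.continuous_orrSommerfeld ν κ d) S.contDiff_vorticity.continuous

lemma modalLaplacian_sq_le (S : SlipPair K w φ) (ν κ d : ℝ) :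
    ν * l2 (modalLaplacian K w) ^ 2 ≤ 2 * |κ| * (l2 (fun y => y • w y) * l2 (deriv w)) +
      l2 (orrSommerfeld ν κ d K w φ) * l2 (modalLaplacian K w) := by
  have hΔ := continuous_modalLaplacian K S.contDiff_vorticity
  have hw := S.contDiff_vorticity.continuous
  have hw' := S.continuous_deriv_vorticity
  have hexpand := S.l2Inner_orrSommerfeld_left ν κ d hΔ
  rw [l2Inner_self, S.l2Inner_I_mul_rayleigh_modalLaplacian] at hexpand
  have hshear : |κ * l2Inner (fun y => Complex.I * deriv w y) (fun y => y • w y)| ≤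
      |κ| * (l2 (fun y => y • w y) * l2 (deriv w)) := by
    rw [abs_mul, mul_comm (l2 _), ← l2_I_mul (deriv w)]
    gcongr
    exact abs_l2Inner_le (by fun_prop) (by fun_prop)
  linarith [neg_l2Inner_le (S.continuous_orrSommerfeld ν κ d) hΔ, neg_le_of_abs_le hshear]

lemma l2Inner_orrSommerfeld_I_mul (S : SlipPair K w φ) (ν κ d : ℝ) (hv : Continuous v) :
    l2Inner (orrSommerfeld ν κ d K w φ) (fun y => Complex.I * v y) =
      -ν * l2Inner (modalLaplacian K w) (fun y => Complex.I * v y) +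
        κ * l2Inner (rayleigh d w φ) v := by
  have hII : l2Inner (fun y => Complex.I * rayleigh d w φ y) (fun y => Complex.I * v y) =
      l2Inner (rayleigh d w φ) v := by
    rw [l2Inner_comm, l2Inner_I_mul_left]
    simp only [← mul_assoc, Complex.I_mul_I, neg_one_mul]
    rw [l2Inner_comm, l2Inner_neg_left, neg_neg]
  rw [S.l2Inner_orrSommerfeld_left ν κ d (by fun_prop), hII]

lemma abs_l2Inner_rayleigh_le (S : SlipPair K w φ) (hν : 0 ≤ ν) (κ d : ℝ) (hv : Continuous v) :
    |κ| * |l2Inner (rayleigh d w φ) v| ≤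
      (l2 (orrSommerfeld ν κ d K w φ) + ν * l2 (modalLaplacian K w)) * l2 v := by
  have hΔ := continuous_modalLaplacian K S.contDiff_vorticity
  have hOS := abs_l2Inner_le (g := fun y => Complex.I * v y) (S.continuous_orrSommerfeld ν κ d)
    (by fun_prop)
  have hvisc := abs_l2Inner_le (g := fun y => Complex.I * v y) hΔ (by fun_prop)
  rw [l2_I_mul] at hOS hvisc
  have hexpand : κ * l2Inner (rayleigh d w φ) v =
      l2Inner (orrSommerfeld ν κ d K w φ) (fun y => Complex.I * v y) +
        ν * l2Inner (modalLaplacian K w) (fun y => Complex.I * v y) := by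
    rw [S.l2Inner_orrSommerfeld_I_mul ν κ d hv]
    ring
  calc |κ| * |l2Inner (rayleigh d w φ) v| ≤
        |l2Inner (orrSommerfeld ν κ d K w φ) (fun y => Complex.I * v y)| +
          |ν * l2Inner (modalLaplacian K w) (fun y => Complex.I * v y)| := by
        rw [← abs_mul, hexpand]
        exact abs_add_le _ _
    _ ≤ l2 (orrSommerfeld ν κ d K w φ) * l2 v + ν * (l2 (modalLaplacian K w) * l2 v) := by
        rw [abs_mul, abs_of_nonneg hν]
        gcongr
    _ = _ := by ring

lemma abs_l2Inner_rayleigh_self_le (S : SlipPair K w φ) (ν κ d : ℝ) :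
    |κ| * |d * l2 w ^ 2 - l2 (fun y => y • w y) ^ 2 - 2 * energy K φ| ≤
      l2 (orrSommerfeld ν κ d K w φ) * l2 w := by
  have hw := S.contDiff_vorticity.continuous
  have hvisc : l2Inner (modalLaplacian K w) (fun y => Complex.I * w y) = 0 := by
    have h := l2Inner_modalLaplacian_comm (K := K) S.contDiff_vorticity S.I_mul.contDiff_vorticity
      S.vorticity_neg_one S.vorticity_one S.I_mul.vorticity_neg_one S.I_mul.vorticity_one
    rw [funext (modalLaplacian_const_mul K Complex.I w), l2Inner_comm w, l2Inner_I_mul_left] at h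
    linarith
  have hexpand := S.l2Inner_orrSommerfeld_I_mul ν κ d hw
  rw [hvisc, mul_zero, zero_add, S.l2Inner_rayleigh_self] at hexpand
  rw [← abs_mul, ← hexpand, ← l2_I_mul w]
  exact abs_l2Inner_le (S.continuous_orrSommerfeld ν κ d) (by fun_prop)

lemma l2_vorticity_sq_le (S : SlipPair K w φ) :
    l2 w ^ 2 ≤ 2 * (l2 (fun y => y • w y) * l2 (deriv w)) :=
  l2_sq_le_two_mul_l2_id_smul_mul_l2_deriv (S.contDiff_vorticity.of_le (by norm_num))
    S.vorticity_neg_one S.vorticity_one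

lemma continuous_modifiedOrrSommerfeld (S : SlipPair K w φ) (ν ε κ d : ℝ) :
    Continuous (modifiedOrrSommerfeld ν ε κ d K w φ) := by
  have hL := S.continuous_orrSommerfeld ν κ d
  have hw := S.contDiff_vorticity.continuous
  unfold modifiedOrrSommerfeld
  fun_prop

lemma l2Inner_modifiedOrrSommerfeld_left (S : SlipPair K w φ) (ν ε κ d : ℝ) (hv : Continuous v) :
    l2Inner (modifiedOrrSommerfeld ν ε κ d K w φ) v =
      l2Inner (orrSommerfeld ν κ d K w φ) v - ε * √(ν * |κ|) * l2Inner w v := by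
  have hw := S.contDiff_vorticity.continuous
  rw [← l2Inner_smul_left, ← l2Inner_sub_left (S.continuous_orrSommerfeld ν κ d) (by fun_prop) hv]
  rfl

lemma l2Inner_modifiedOrrSommerfeld_adjoint (S : SlipPair K w φ) (T : SlipPair K v χ)
    (ν ε κ d : ℝ) : l2Inner (modifiedOrrSommerfeld ν ε κ d K w φ) v =
      l2Inner w (modifiedOrrSommerfeld ν ε (-κ) d K v χ) := by
  rw [S.l2Inner_modifiedOrrSommerfeld_left ν ε κ d T.contDiff_vorticity.continuous,
    l2Inner_comm w (modifiedOrrSommerfeld _ _ _ _ _ _ _),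
    T.l2Inner_modifiedOrrSommerfeld_left ν ε (-κ) d S.contDiff_vorticity.continuous,
    S.l2Inner_orrSommerfeld_adjoint T, l2Inner_comm w, l2Inner_comm w, abs_neg]

lemma energy_vorticity_eq (S : SlipPair K w φ) (ν ε κ d : ℝ) :
    ν * energy K w =
      l2Inner (modifiedOrrSommerfeld ν ε κ d K w φ) w + ε * √(ν * |κ|) * l2 w ^ 2 := by
  rw [S.l2Inner_modifiedOrrSommerfeld_left ν ε κ d S.contDiff_vorticity.continuous,
    S.l2Inner_orrSommerfeld_self, l2Inner_self]
  ring

end SlipPair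

end OrrSommerfeld

section Multiplier

variable {f : ℝ → ℂ} {ρ ρ' β β' γ σ : ℝ → ℝ}

lemma l2Inner_weight_add_self (hρ : Continuous ρ) (hσ : Continuous σ) (hf : Continuous f) :
    l2Inner (fun y => (ρ y + σ y) • f y) f =
      l2Inner (fun y => ρ y • f y) f + l2Inner (fun y => σ y • f y) f := by
  simp only [add_smul]
  exact l2Inner_add_left (by fun_prop) (by fun_prop) hf

lemma l2Inner_weight_const_mul_self (c : ℝ) (ρ : ℝ → ℝ) (f : ℝ → ℂ) :
    l2Inner (fun y => (c * ρ y) • f y) f = c * l2Inner (fun y => ρ y • f y) f := by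
  simp only [mul_smul, l2Inner_smul_left]

lemma l2_multiplier_le {b c : ℝ} (hβ : Continuous β) (hγ : Continuous γ) {f f' : ℝ → ℂ}
    (hf : Continuous f) (hf' : Continuous f') (hb : ∀ y ∈ Set.Icc (-1 : ℝ) 1, |β y| ≤ b)
    (hc : ∀ y ∈ Set.Icc (-1 : ℝ) 1, |γ y| ≤ c) :
    l2 (fun y => β y • f' y + γ y • f y) ≤ b * l2 f' + c * l2 f :=
  (l2_add_le (by fun_prop) (by fun_prop)).trans
    (add_le_add (l2_weight_smul_le hβ hf' hb) (l2_weight_smul_le hγ hf hc))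

namespace SlipPair

variable {K : ℝ} {w φ : ℝ → ℂ}

lemma l2Inner_shear_multiplier (S : SlipPair K w φ) (hρ : ∀ y, HasDerivAt ρ (ρ' y) y)
    (hρ' : Continuous ρ') (hβ : ∀ y, HasDerivAt β (β' y) y) (hβ' : Continuous β')
    (hγ : Continuous γ) :
    l2Inner (fun y => ρ y • w y) (fun y => β y • deriv w y + γ y • w y) =
      l2Inner (fun y => (ρ y * γ y - (ρ' y * β y + ρ y * β' y) / 2) • w y) w := by
  have hw := S.contDiff_vorticity.continuous
  have hw' := S.continuous_deriv_vorticity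
  have hcρ : Continuous ρ := continuous_iff_continuousAt.2 fun y => (hρ y).continuousAt
  have hcβ : Continuous β := continuous_iff_continuousAt.2 fun y => (hβ y).continuousAt
  have hderiv := l2Inner_weight_smul_deriv_self (fun y => (hρ y).mul (hβ y)) (by fun_prop)
    S.hasDerivAt_vorticity hw' (by simp [S.vorticity_one, S.vorticity_neg_one])
  have hfirst : l2Inner (fun y => ρ y • w y) (fun y => β y • deriv w y) =
      l2Inner (fun y => (ρ y * β y) • w y) (deriv w) := by
    rw [← l2Inner_weight_smul_left β]
    simp only [smul_smul, mul_comm]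
  have hsecond : l2Inner (fun y => ρ y • w y) (fun y => γ y • w y) =
      l2Inner (fun y => (ρ y * γ y) • w y) w := by
    rw [← l2Inner_weight_smul_left γ]
    simp only [smul_smul, mul_comm]
  have hcombine := l2Inner_weight_add_self (ρ := fun y => ρ y * γ y)
    (σ := fun y => -(1 / 2) * (ρ' y * β y + ρ y * β' y)) (by fun_prop) (by fun_prop) hw
  rw [l2Inner_weight_const_mul_self] at hcombine
  rw [l2Inner_add_right (by fun_prop) (by fun_prop) (by fun_prop), hfirst, hsecond]
  refine (?_ : _ = _).trans (hcombine.symm.trans ?_)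
  · simp only [Pi.mul_apply] at hderiv
    change l2Inner (fun y => (ρ y * β y) • w y) (deriv w) = _ at hderiv
    rw [hderiv]
    ring
  · congr 2 with y
    ring_nf

lemma l2Inner_stream_multiplier (S : SlipPair K w φ) (hβ : ∀ y, HasDerivAt β (β' y) y)
    (hβ' : Continuous β') (σ : ℝ) :
    l2Inner φ (fun y => β y • deriv w y + (β' y - σ) • w y) =
      σ * energy K φ - l2Inner (fun y => β y • deriv φ y) w := by
  have hw := S.contDiff_vorticity.continuous
  have hw' := S.continuous_deriv_vorticity
  have hφ := S.contDiff_stream.continuous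
  have hcβ : Continuous β := continuous_iff_continuousAt.2 fun y => (hβ y).continuousAt
  have hderiv := l2Inner_weight_smul_deriv hβ hβ' S.hasDerivAt_stream S.hasDerivAt_vorticity
    S.continuous_deriv_stream hw' (by simp [S.vorticity_one, S.vorticity_neg_one])
  have hzeroth : l2Inner φ (fun y => (β' y - σ) • w y) =
      l2Inner (fun y => β' y • φ y) w + σ * energy K φ := by
    simp only [sub_smul]
    rw [l2Inner_sub_right hφ (by fun_prop) (by fun_prop), l2Inner_smul_right,
      S.l2Inner_stream_vorticity, l2Inner_weight_smul_left]
    ring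
  rw [l2Inner_add_right hφ (by fun_prop) (by fun_prop), hzeroth, ← l2Inner_weight_smul_left, hderiv]
  ring

lemma l2Inner_rayleigh_multiplier (S : SlipPair K w φ) (hβ : ∀ y, HasDerivAt β (β' y) y)
    (hβ' : Continuous β') (d σ : ℝ) :
    l2Inner (rayleigh d w φ) (fun y => β y • deriv w y + (β' y - σ) • w y) =
      l2Inner (fun y => (y * β y + (d - y ^ 2) * (β' y / 2 - σ)) • w y) w -
        2 * l2Inner (fun y => β y • deriv φ y) w + 2 * (σ * energy K φ) := by
  have hw := S.contDiff_vorticity.continuous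
  have hw' := S.continuous_deriv_vorticity
  have hcβ : Continuous β := continuous_iff_continuousAt.2 fun y => (hβ y).continuousAt
  rw [S.l2Inner_rayleigh_left d (by fun_prop),
    S.l2Inner_shear_multiplier (fun y => (hasDerivAt_pow 2 y).const_sub d) (by fun_prop) hβ hβ'
      (by fun_prop), S.l2Inner_stream_multiplier hβ hβ' σ]
  have hweight (y : ℝ) : (d - y ^ 2) * (β' y - σ) -
      (-((2 : ℕ) * y ^ (2 - 1)) * β y + (d - y ^ 2) * β' y) / 2 =
        y * β y + (d - y ^ 2) * (β' y / 2 - σ) := by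
    norm_num
    ring
  simp only [hweight]
  ring

lemma two_mul_l2Inner_weight_deriv_stream_vorticity (S : SlipPair K w φ)
    (hβ : ∀ y, HasDerivAt β (β' y) y) (hβ' : Continuous β') (hl : β (-1) = 0) (hr : β 1 = 0) :
    2 * l2Inner (fun y => β y • deriv φ y) w =
      K * l2Inner (fun y => β' y • φ y) φ - l2Inner (fun y => β' y • deriv φ y) (deriv φ) := by
  have hφ := S.contDiff_stream.continuous
  have hφ' := S.continuous_deriv_stream
  have hφ'' := (contDiff_one_deriv_of_contDiff_two S.contDiff_stream).continuous_deriv_one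
  have hcβ : Continuous β := continuous_iff_continuousAt.2 fun y => (hβ y).continuousAt
  have hderiv := l2Inner_weight_smul_deriv_self hβ hβ'
    (hasDerivAt_deriv_of_contDiff_two S.contDiff_stream) hφ'' (by simp [hl, hr])
  have hstream := l2Inner_weight_smul_deriv_self hβ hβ' S.hasDerivAt_stream hφ'
    (by simp [hl, hr])
  have hexpand : l2Inner (fun y => β y • deriv φ y) w =
      l2Inner (fun y => β y • deriv φ y) (deriv (deriv φ)) -
        K * l2Inner (fun y => β y • φ y) (deriv φ) := by
    rw [← l2Inner_congr_right _ S.modalLaplacian_stream, l2Inner_weight_smul_left β φ,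
      l2Inner_comm φ, ← l2Inner_smul_right,
      ← l2Inner_sub_right (by fun_prop) (by fun_prop) (by fun_prop)]
    rfl
  rw [hstream, hderiv] at hexpand
  linarith

lemma continuous_residual (S : SlipPair K w φ) : Continuous fun y => y • w y - deriv φ y := by
  have hw := S.contDiff_vorticity.continuous
  have hφ' := S.continuous_deriv_stream
  fun_prop

lemma l2Inner_residual_deriv_stream (S : SlipPair K w φ) :
    l2Inner (fun y => (1 - y ^ 2) • (y • w y - deriv φ y)) (deriv φ) =
      K / 2 * (l2 φ ^ 2 - 3 * l2 (fun y => y • φ y) ^ 2) -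
        (3 * l2 (deriv φ) ^ 2 - 5 * l2 (fun y => y • deriv φ y) ^ 2) / 2 := by
  have hw := S.contDiff_vorticity.continuous
  have hφ := S.contDiff_stream.continuous
  have hφ' := S.continuous_deriv_stream
  have hβ (y : ℝ) : HasDerivAt (fun y => y * (1 - y ^ 2)) (1 - 3 * y ^ 2) y :=
    ((hasDerivAt_id' y).mul ((hasDerivAt_pow 2 y).const_sub 1)).congr_deriv (by push_cast; ring)
  have hmain := S.two_mul_l2Inner_weight_deriv_stream_vorticity hβ (by fun_prop) (by norm_num)
    (by norm_num)
  have hsplit : l2Inner (fun y => (1 - y ^ 2) • (y • w y - deriv φ y)) (deriv φ) =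
      l2Inner (fun y => (y * (1 - y ^ 2)) • deriv φ y) w -
        l2Inner (fun y => (1 - 1 * y ^ 2) • deriv φ y) (deriv φ) := by
    rw [l2Inner_weight_smul_left _ (deriv φ) w, l2Inner_comm (deriv φ),
      ← l2Inner_sub_left (by fun_prop) (by fun_prop) hφ']
    simp only [smul_sub, smul_smul, mul_one, mul_comm]
  rw [l2Inner_quadratic_weight_self 1 3 hφ, l2Inner_quadratic_weight_self 1 3 hφ'] at hmain
  rw [hsplit, l2Inner_quadratic_weight_self 1 1 hφ']
  linarith

lemma l2Inner_residual_stream (S : SlipPair K w φ) :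
    l2Inner (fun y => y • (y • w y - deriv φ y)) φ =
      3 / 2 * l2 φ ^ 2 - K * l2 (fun y => y • φ y) ^ 2 - l2 (fun y => y • deriv φ y) ^ 2 := by
  have hw := S.contDiff_vorticity.continuous
  have hφ := S.contDiff_stream.continuous
  have hφ' := S.continuous_deriv_stream
  have hcross : l2Inner (fun y => y • φ y) (deriv φ) = -l2 φ ^ 2 / 2 := by
    have h := l2Inner_weight_smul_deriv_self (fun y => hasDerivAt_id' y) continuous_const
      S.hasDerivAt_stream hφ' (by simp [S.stream_one, S.stream_neg_one])
    simpa only [one_smul, l2Inner_self] using h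
  have hderiv (y : ℝ) : HasDerivAt (fun y => (y ^ 2) • φ y)
      ((y ^ 2) • deriv φ y + (2 : ℝ) • y • φ y) y :=
    ((hasDerivAt_pow 2 y).smul (S.hasDerivAt_stream y)).congr_deriv (by simp [mul_assoc])
  have hgreen := l2Inner_modalLaplacian_left (K := K) S.contDiff_stream hderiv (by fun_prop)
    (by simp [S.stream_neg_one]) (by simp [S.stream_one])
  rw [l2Inner_congr_left S.modalLaplacian_stream, l2Inner_add_right hφ' (by fun_prop) (by fun_prop),
    l2Inner_smul_right, l2Inner_comm _ (fun y => y • φ y), hcross,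
    ← l2Inner_weight_smul_left (fun y => y ^ 2) (deriv φ), ← l2_weight_smul_sq,
    ← l2Inner_weight_smul_left (fun y => y ^ 2) φ, ← l2_weight_smul_sq] at hgreen
  have hsplit : l2Inner (fun y => y • (y • w y - deriv φ y)) φ =
      l2Inner w (fun y => (y ^ 2) • φ y) - l2Inner (fun y => y • φ y) (deriv φ) := by
    rw [l2Inner_comm _ (deriv φ), ← l2Inner_weight_smul_left, ← l2Inner_weight_smul_left,
      ← l2Inner_sub_left (by fun_prop) (by fun_prop) hφ]
    simp only [smul_sub, smul_smul, sq]
  rw [hsplit, hcross, hgreen]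
  ring

lemma l2_deriv_stream_sq_le_residual (S : SlipPair K w φ) (hK : 1 ≤ K) :
    l2 (deriv φ) ^ 2 ≤
      7 / 4 * l2 (fun y => y • w y - deriv φ y) ^ 2 + 11 / 2 * (K * l2 φ ^ 2) := by
  have hφ := S.contDiff_stream.continuous
  have hφ' := S.continuous_deriv_stream
  have hr := S.continuous_residual
  set R := l2 (fun y => y • w y - deriv φ y)
  have hfirst : -l2Inner (fun y => (1 - y ^ 2) • (y • w y - deriv φ y)) (deriv φ) ≤
      R * l2 (deriv φ) := by
    refine (neg_l2Inner_le (by fun_prop) hφ').trans ?_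
    have := l2_nonneg (deriv φ)
    have := l2_weight_smul_le (ρ := fun y => 1 - y ^ 2) (B := 1) (by fun_prop) hr fun y hy => by
      rw [abs_le]; constructor <;> nlinarith [hy.1, hy.2]
    rw [one_mul] at this
    gcongr
  have hsecond : -l2Inner (fun y => y • (y • w y - deriv φ y)) φ ≤ R * l2 φ := by
    refine (neg_l2Inner_le (by fun_prop) hφ).trans ?_
    have := l2_nonneg φ
    have := l2_weight_smul_le (ρ := fun y => y) (B := 1) (by fun_prop) hr fun y hy => abs_le.2 hy
    rw [one_mul] at this
    gcongr
  rw [S.l2Inner_residual_deriv_stream] at hfirst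
  rw [S.l2Inner_residual_stream] at hsecond
  nlinarith [sq_nonneg (R - l2 (deriv φ)), sq_nonneg (R - l2 φ), sq_nonneg (l2 φ),
    mul_nonneg (sub_nonneg.2 hK) (sq_nonneg (l2 φ)),
    mul_nonneg (sub_nonneg.2 hK) (sq_nonneg (l2 (fun y => y • φ y))),
    sq_nonneg (l2 (fun y => y • φ y))]

lemma l2Inner_rayleigh_dilation (S : SlipPair K w φ) (d : ℝ) :
    l2Inner (rayleigh d w φ) (fun y => (2 * y) • deriv w y + (2 - 1 : ℝ) • w y) =
      2 * l2 (fun y => y • w y - deriv φ y) ^ 2 + 2 * (K * l2 φ ^ 2) := by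
  have hw := S.contDiff_vorticity.continuous
  have hφ' := S.continuous_deriv_stream
  have hβ (y : ℝ) : HasDerivAt (fun y : ℝ => 2 * y) 2 y := by
    simpa using (hasDerivAt_id' y).const_mul 2
  have hweight (y : ℝ) : y * (2 * y) + (d - y ^ 2) * (2 / 2 - 1) = 2 * y ^ 2 := by ring
  rw [S.l2Inner_rayleigh_multiplier hβ continuous_const d 1]
  simp only [hweight, mul_smul (2 : ℝ), l2Inner_smul_left]
  rw [← l2_weight_smul_sq, l2Inner_weight_smul_left, l2Inner_comm (deriv φ),
    l2_sub_sq (by fun_prop) hφ', energy]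
  ring

lemma coercive_dilation (S : SlipPair K w φ) (hK : 1 ≤ K) (d : ℝ) :
    (l2 (fun y => y • w y) ^ 2 + energy K φ) / 10 ≤
      l2Inner (rayleigh d w φ) (fun y => (2 * y) • deriv w y + (2 - 1 : ℝ) • w y) := by
  have hφ' := S.continuous_deriv_stream
  have hr := S.continuous_residual
  have htriangle : l2 (fun y => y • w y) ≤ l2 (fun y => y • w y - deriv φ y) + l2 (deriv φ) := by
    simpa only [sub_add_cancel] using l2_add_le hr hφ'
  rw [S.l2Inner_rayleigh_dilation, energy]
  nlinarith [S.l2_deriv_stream_sq_le_residual hK, l2_nonneg (fun y => y • w y),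
    sq_nonneg (l2 (fun y => y • w y - deriv φ y) - l2 (deriv φ)),
    mul_nonneg (zero_le_one.trans hK) (sq_nonneg (l2 φ))]

end SlipPair

/-- The Lorentzian `e / (e + y²)`, a cutoff to the critical layer `|y| ≲ √e` in which the shear
`d - y²` with `0 < d ≲ e` can change sign. -/
def lorentzian (e y : ℝ) : ℝ := e / (e + y ^ 2)

section Lorentzian

variable {e : ℝ}

lemma lorentzian_nonneg (he : 0 < e) (y : ℝ) : 0 ≤ lorentzian e y := by
  unfold lorentzian
  positivity

lemma lorentzian_le_one (he : 0 < e) (y : ℝ) : lorentzian e y ≤ 1 :=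
  div_le_one_of_le₀ (by nlinarith [sq_nonneg y]) (by positivity)

lemma mul_one_sub_lorentzian (he : 0 < e) (y : ℝ) :
    e * (1 - lorentzian e y) = y ^ 2 * lorentzian e y := by
  unfold lorentzian
  field_simp
  ring

lemma lorentzian_one_le (he : 0 < e) {y : ℝ} (hy : y ∈ Set.Icc (-1 : ℝ) 1) :
    lorentzian e 1 ≤ lorentzian e y := by
  have : y ^ 2 ≤ 1 := by nlinarith [hy.1, hy.2]
  unfold lorentzian
  rw [one_pow]
  gcongr

lemma lorentzian_one_le_eighth (he : 0 < e) (he' : e ≤ 1 / 7) : lorentzian e 1 ≤ 1 / 8 := by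
  rw [lorentzian, div_le_div_iff₀ (by positivity) (by norm_num)]
  linarith

lemma continuous_lorentzian (he : 0 < e) : Continuous (lorentzian e) :=
  continuous_const.div (by fun_prop) fun y => by positivity

lemma hasDerivAt_mul_lorentzian (he : 0 < e) (y : ℝ) :
    HasDerivAt (fun y => y * lorentzian e y) (2 * lorentzian e y ^ 2 - lorentzian e y) y := by
  have hne : e + y ^ 2 ≠ 0 := by positivity
  refine ((hasDerivAt_id' y).mul
    ((hasDerivAt_const y e).div ((hasDerivAt_pow 2 y).const_add e) hne)).congr_deriv ?_
  simp only [lorentzian, Pi.div_apply]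
  field_simp
  push_cast
  ring

end Lorentzian

/-- The weight `2y(G - G(1))` with `G` the Lorentzian: the dilation `2y∂_y` localised to the
critical layer, corrected so as to vanish at `±1`. -/
def layerDilation (e y : ℝ) : ℝ := 2 * (y * lorentzian e y - lorentzian e 1 * y)

/-- The derivative of `layerDilation`. -/
def layerDilationDeriv (e y : ℝ) : ℝ :=
  2 * (2 * lorentzian e y ^ 2 - lorentzian e y - lorentzian e 1)

section LayerDilation

variable {e d : ℝ}

lemma hasDerivAt_layerDilation (he : 0 < e) (y : ℝ) :
    HasDerivAt (layerDilation e) (layerDilationDeriv e y) y := by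
  refine (((hasDerivAt_mul_lorentzian he y).sub
    ((hasDerivAt_id' y).const_mul (lorentzian e 1))).const_mul 2).congr_deriv ?_
  rw [layerDilationDeriv, mul_one]

lemma continuous_layerDilation (he : 0 < e) : Continuous (layerDilation e) :=
  continuous_iff_continuousAt.2 fun y => (hasDerivAt_layerDilation he y).continuousAt

lemma continuous_layerDilationDeriv (he : 0 < e) : Continuous (layerDilationDeriv e) := by
  have := continuous_lorentzian he
  unfold layerDilationDeriv
  fun_prop

lemma abs_layerDilation_le (hd : 0 < d) {y : ℝ} (hy : y ∈ Set.Icc (-1 : ℝ) 1) :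
    |layerDilation (3 * d) y| ≤ 10 * √d := by
  have he : 0 < 3 * d := by positivity
  have hs := lorentzian_one_le he hy
  have hs' := lorentzian_nonneg he 1
  have hyG := mul_one_sub_lorentzian he y
  have hsq : (layerDilation (3 * d) y) ^ 2 ≤ (10 * √d) ^ 2 := by
    calc (layerDilation (3 * d) y) ^ 2 =
          4 * (y ^ 2 * (lorentzian (3 * d) y - lorentzian (3 * d) 1) ^ 2) := by
          unfold layerDilation; ring
      _ ≤ 4 * (y ^ 2 * lorentzian (3 * d) y ^ 2) := by
          gcongr
          linarith
      _ = 12 * d * ((1 - lorentzian (3 * d) y) * lorentzian (3 * d) y) := by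
          linear_combination (-4 * lorentzian (3 * d) y) * hyG
      _ ≤ (10 * √d) ^ 2 := by
          rw [mul_pow, Real.sq_sqrt hd.le]
          nlinarith [mul_nonneg hd.le (sq_nonneg (lorentzian (3 * d) y - 1 / 2))]
  exact abs_le_of_sq_le_sq hsq (by positivity)

lemma le_layer_shear_weight (hd : 0 < d) (hd' : d ≤ 1 / 21) (y : ℝ) :
    3 / 4 * y ^ 2 ≤ y * layerDilation (3 * d) y + (d - y ^ 2) *
      (layerDilationDeriv (3 * d) y / 2 - (1 - lorentzian (3 * d) 1)) := by
  have he : 0 < 3 * d := by positivity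
  have hG := lorentzian_nonneg he y
  have hG' := lorentzian_le_one he y
  have hs := lorentzian_one_le_eighth he (by linarith)
  have hyG := mul_one_sub_lorentzian he y
  calc 3 / 4 * y ^ 2 ≤ y ^ 2 * (1 + 8 / 3 * (lorentzian (3 * d) y * (1 - lorentzian (3 * d) y)) -
          2 * lorentzian (3 * d) 1) := by
        nlinarith [mul_nonneg (sq_nonneg y) (mul_nonneg hG (sub_nonneg.2 hG')), sq_nonneg y]
    _ = _ := by
        unfold layerDilation layerDilationDeriv
        linear_combination (1 / 3 * (2 * lorentzian (3 * d) y + 1)) * hyG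

end LayerDilation

namespace SlipPair

variable {K d : ℝ} {w φ : ℝ → ℂ}

lemma layer_stream_deriv_le (S : SlipPair K w φ) {e : ℝ} (he : 0 < e) :
    |l2Inner (fun y => layerDilation e y • deriv φ y) w| ≤
      2 * (l2 (deriv φ) * l2 (fun y => y • w y)) := by
  have hw := S.contDiff_vorticity.continuous
  have hφ' := S.continuous_deriv_stream
  have hG := continuous_lorentzian he
  have hsplit : l2Inner (fun y => layerDilation e y • deriv φ y) w =
      2 * l2Inner (fun y => (lorentzian e y - lorentzian e 1) • deriv φ y) (fun y => y • w y) := by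
    rw [← l2Inner_weight_smul_left (fun y => y), ← l2Inner_smul_left]
    simp only [smul_smul]
    congr 2 with y
    unfold layerDilation
    ring_nf
  have hbound := l2_weight_smul_le (ρ := fun y => lorentzian e y - lorentzian e 1) (B := 1)
    (by fun_prop) hφ' fun y hy => by
      rw [abs_of_nonneg (sub_nonneg.2 (lorentzian_one_le he hy))]
      linarith [lorentzian_le_one he y, lorentzian_nonneg he 1]
  rw [one_mul] at hbound
  have hY := l2_nonneg fun y => y • w y
  rw [hsplit, abs_mul, abs_two]
  gcongr
  exact (abs_l2Inner_le (by fun_prop) (by fun_prop)).trans (by gcongr)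

lemma coercive_layerDilation (S : SlipPair K w φ) (hK : 0 ≤ K) (hd : 0 < d) (hd' : d ≤ 1 / 21) :
    (l2 (fun y => y • w y) ^ 2 + energy K φ) / 10 ≤
      l2Inner (rayleigh d w φ) (fun y => layerDilation (3 * d) y • deriv w y +
        (layerDilationDeriv (3 * d) y - (1 - lorentzian (3 * d) 1)) • w y) := by
  have he : 0 < 3 * d := by positivity
  have hw := S.contDiff_vorticity.continuous
  have hφ := S.contDiff_stream.continuous
  have hφ' := S.continuous_deriv_stream
  have hβ := continuous_layerDilation he
  have hβ' := continuous_layerDilationDeriv he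
  have hs := lorentzian_one_le_eighth he (by linarith)
  have hs' := lorentzian_nonneg he 1
  have hshear := l2Inner_weight_self_mono (ρ := fun y => 3 / 4 * y ^ 2) (by fun_prop)
    (by fun_prop) hw fun y _ => le_layer_shear_weight hd hd' y
  have hlower := l2Inner_weight_self_mono (ρ := fun _ => -(1 / 2)) continuous_const hβ' hφ'
    fun y _ => by
      unfold layerDilationDeriv
      nlinarith [sq_nonneg (lorentzian (3 * d) y - 1 / 4)]
  have hupper := l2Inner_weight_self_mono (σ := fun _ => 2 - 2 * lorentzian (3 * d) 1) hβ'
    continuous_const hφ fun y _ => by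
      unfold layerDilationDeriv
      nlinarith [mul_nonneg (lorentzian_nonneg he y) (sub_nonneg.2 (lorentzian_le_one he y)),
        lorentzian_le_one he y]
  rw [l2Inner_weight_const_mul_self, ← l2_weight_smul_sq] at hshear
  rw [l2Inner_smul_left, l2Inner_self] at hlower hupper
  have hident := S.two_mul_l2Inner_weight_deriv_stream_vorticity (hasDerivAt_layerDilation he) hβ'
    (by simp [layerDilation, lorentzian]) (by simp [layerDilation])
  rw [S.l2Inner_rayleigh_multiplier (hasDerivAt_layerDilation he) hβ', energy]
  set Y := l2 fun y => y • w y
  nlinarith [le_of_abs_le (S.layer_stream_deriv_le he), mul_le_mul_of_nonneg_left hupper hK,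
    sq_nonneg (Y - l2 (deriv φ)), mul_nonneg hK (sq_nonneg (l2 φ)),
    mul_nonneg hs' (mul_nonneg hK (sq_nonneg (l2 φ))), sq_nonneg Y,
    mul_nonneg (sub_nonneg.2 hs) (sq_nonneg (l2 (deriv φ)))]

lemma exists_multiplier (S : SlipPair K w φ) (hK : 1 ≤ K) (hd : 0 < d) :
    ∃ v : ℝ → ℂ, Continuous v ∧ l2 v ≤ 10 * √d * l2 (deriv w) + 2 * l2 w ∧
      (l2 (fun y => y • w y) ^ 2 + energy K φ) / 10 ≤ l2Inner (rayleigh d w φ) v := by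
  have hw := S.contDiff_vorticity.continuous
  have hw' := S.continuous_deriv_vorticity
  rcases le_total d (1 / 21) with hsmall | hlarge
  · have he : 0 < 3 * d := by positivity
    have hβ := continuous_layerDilation he
    have hβ' := continuous_layerDilationDeriv he
    refine ⟨_, by fun_prop, l2_multiplier_le hβ (by fun_prop) hw hw'
      (fun y hy => abs_layerDilation_le hd hy) (fun y _ => ?_),
      S.coercive_layerDilation (by linarith) hd hsmall⟩
    have hs := lorentzian_one_le_eighth he (by linarith)
    have hs' := lorentzian_nonneg he 1
    have hG := lorentzian_nonneg he y
    have hG' := lorentzian_le_one he y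
    rw [abs_le, layerDilationDeriv]
    constructor <;> nlinarith [sq_nonneg (lorentzian (3 * d) y - 1 / 4)]
  · refine ⟨_, by fun_prop, l2_multiplier_le (by fun_prop) continuous_const hw hw'
      (fun y hy => ?_) (fun y _ => by norm_num), S.coercive_dilation hK d⟩
    have hroot : 1 / 5 ≤ √d := Real.le_sqrt_of_sq_le (by linarith)
    rw [abs_le]
    constructor <;> linarith [hy.1, hy.2]

end SlipPair

end Multiplier

section ResolventEstimate

lemma le_and_le_of_dissipation_of_hardy {n V x r θ : ℝ} (hn : 0 < n) (hx : 0 ≤ x)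
    (hr : r ≤ θ ^ 4 * n) (hdissipation : V ^ 2 ≤ r * n) (hhardy : n ^ 2 ≤ 2 * (x * V)) :
    V ≤ θ ^ 2 * n ∧ n ≤ 2 * θ ^ 2 * x := by
  have hV : V ≤ θ ^ 2 * n := le_of_sq_le_sq (by nlinarith) (by positivity)
  refine ⟨hV, le_of_mul_le_mul_right ?_ hn⟩
  nlinarith [mul_le_mul_of_nonneg_left hV hx]

lemma le_three_mul_of_sq_le {m V x r Z θ : ℝ} (hm : 0 < m) (hV : 0 ≤ V) (hθ : 0 < θ)
    (hθ' : θ ≤ 1) (hVm : V ≤ θ ^ 2 * m) (hxm : x ≤ 2 * m) (hr : r ≤ θ ^ 4 * m)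
    (hZ : Z ^ 2 ≤ 2 * (x * V) + r * Z) : Z ≤ 3 * θ * m := by
  by_contra! hlt
  have hZ0 : 0 < Z := lt_trans (by positivity) hlt
  have hrm : r ≤ θ * m := hr.trans (by gcongr; exact pow_le_of_le_one hθ.le hθ' (by norm_num))
  have hxV : x * V ≤ 2 * m * (θ ^ 2 * m) := by gcongr
  have hgap : 3 * θ * m * (2 * θ * m) ≤ Z * (Z - r) := by
    gcongr
    linarith
  nlinarith [mul_pos (pow_pos hθ 2) (pow_pos hm 2)]

/-- The constant of the `L²` resolvent estimate. -/
def resolventConst : ℝ := (1 / 1000) ^ 4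

lemma resolventConst_pos : 0 < resolventConst := by
  unfold resolventConst
  positivity

/- The inequalities are those satisfied by a vorticity mode, in units of the critical-layer width
`δ = (ν / |κ|)^{1/4}`: `n = ‖w‖`, `V = δ‖w'‖`, `x = ‖yw‖ / δ`, `H = energy φ / δ²`,
`Z = δ²‖Δw‖` and `r = ‖Lw‖ / √(ν|κ|)`. If `r ≪ n`, then dissipation is small, Hardy makes `x`
large compared with `n`, and the multiplier estimate is violated. -/
lemma resolventConst_mul_le_of_scaled {n V x H Z r d : ℝ} (hn : 0 ≤ n) (hV : 0 ≤ V) (hx : 0 ≤ x)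
    (hH : 0 ≤ H) (hr : 0 ≤ r) (hdissipation : V ^ 2 ≤ r * n)
    (hhardy : n ^ 2 ≤ 2 * (x * V)) (hlaplacian : Z ^ 2 ≤ 2 * (x * V) + r * Z)
    (hbalance : |d * n ^ 2 - x ^ 2 - 2 * H| ≤ r * n)
    (hmultiplier : 0 < d → (x ^ 2 + H) / 10 ≤ (r + Z) * (10 * √d * V + 2 * n)) :
    resolventConst * n ≤ r := by
  by_contra! hlt
  have hn : 0 < n := lt_of_le_of_ne hn fun h => by simp [← h] at hlt; linarith
  obtain ⟨θ, hθ⟩ : ∃ θ : ℝ, θ = 1 / 1000 := ⟨_, rfl⟩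
  have hθ0 : 0 < θ := by rw [hθ]; norm_num
  have hrn : r ≤ θ ^ 4 * n := by rw [hθ]; exact hlt.le
  obtain ⟨hVn, hnx⟩ := le_and_le_of_dissipation_of_hardy hn hx hrn hdissipation hhardy
  obtain ⟨hlower, hupper⟩ := abs_le.1 hbalance
  have hrn2 : r * n ≤ n ^ 2 / 4 := by rw [hθ] at hrn; nlinarith
  have hd : 1 < d := by
    by_contra! hd
    have hnx' : n ≤ x / 2 := by rw [hθ] at hnx; linarith
    nlinarith [mul_le_mul_of_nonneg_right hd (sq_nonneg n), pow_le_pow_left₀ hn.le hnx' 2]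
  obtain ⟨m, hm⟩ : ∃ m, m = √d * n := ⟨_, rfl⟩
  have hm2 : m ^ 2 = d * n ^ 2 := by rw [hm, mul_pow, Real.sq_sqrt (by linarith)]
  have hnm : n ≤ m := by
    rw [hm]
    exact le_mul_of_one_le_left hn.le (Real.one_le_sqrt.2 hd.le)
  have hm0 : 0 < m := hn.trans_le hnm
  have hxm : x ≤ 2 * m := le_of_sq_le_sq (by nlinarith) (by positivity)
  have hrm : r ≤ θ ^ 4 * m := hrn.trans (by gcongr)
  have hZm : Z ≤ 3 * θ * m := le_three_mul_of_sq_le hm0 hV hθ0 (by rw [hθ]; norm_num)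
    (hVn.trans (by gcongr)) hxm hrm hlaplacian
  have htest : 10 * √d * V + 2 * n ≤ 10 * θ ^ 2 * m + 2 * m := by
    have : √d * V ≤ √d * (θ ^ 2 * n) := by gcongr
    rw [hm] at hnm ⊢
    linarith
  have hcontra : (x ^ 2 + H) / 10 ≤ (θ ^ 4 * m + 3 * θ * m) * (10 * θ ^ 2 * m + 2 * m) :=
    (hmultiplier (by linarith)).trans (by gcongr)
  rw [hθ] at hcontra
  nlinarith [pow_pos hm0 2]

lemma resolventConst_mul_le_of_layer_width {n V X E Δ R d δ κ : ℝ} (hδ : 0 < δ) (hκ : 0 < κ)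
    (hn : 0 ≤ n) (hV : 0 ≤ V) (hX : 0 ≤ X) (hE : 0 ≤ E) (hR : 0 ≤ R)
    (hdissipation : δ ^ 4 * κ * V ^ 2 ≤ R * n) (hhardy : n ^ 2 ≤ 2 * (X * V))
    (hlaplacian : δ ^ 4 * κ * Δ ^ 2 ≤ 2 * κ * (X * V) + R * Δ)
    (hbalance : κ * |d * n ^ 2 - X ^ 2 - 2 * E| ≤ R * n)
    (hmultiplier : 0 < d → κ * ((X ^ 2 + E) / 10) ≤
      (R + δ ^ 4 * κ * Δ) * (10 * √d * V + 2 * n)) :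
    resolventConst * (δ ^ 2 * κ) * n ≤ R := by
  obtain ⟨r, rfl⟩ : ∃ r, R = δ ^ 2 * κ * r := ⟨_, (mul_div_cancel₀ _ (by positivity)).symm⟩
  obtain ⟨x, rfl⟩ : ∃ x, X = δ * x := ⟨_, (mul_div_cancel₀ _ hδ.ne').symm⟩
  obtain ⟨H, rfl⟩ : ∃ H, E = δ ^ 2 * H := ⟨_, (mul_div_cancel₀ _ (by positivity)).symm⟩
  obtain ⟨D, rfl⟩ : ∃ D, d = δ ^ 2 * D := ⟨_, (mul_div_cancel₀ _ (by positivity)).symm⟩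
  have hscale : 0 < δ ^ 2 * κ := by positivity
  have hbalance' : |D * n ^ 2 - x ^ 2 - 2 * H| ≤ r * n := by
    have hfactor : δ ^ 2 * D * n ^ 2 - (δ * x) ^ 2 - 2 * (δ ^ 2 * H) =
        δ ^ 2 * (D * n ^ 2 - x ^ 2 - 2 * H) := by ring
    rw [hfactor, abs_mul, abs_of_pos (by positivity)] at hbalance
    exact le_of_mul_le_mul_left (by linarith) hscale
  have hmultiplier' (hD : 0 < D) :
      (x ^ 2 + H) / 10 ≤ (r + δ ^ 2 * Δ) * (10 * √D * (δ * V) + 2 * n) := by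
    have h := hmultiplier (by positivity)
    rw [Real.sqrt_mul (by positivity), Real.sqrt_sq hδ.le] at h
    exact le_of_mul_le_mul_left (by linarith) hscale
  have hscaled : resolventConst * n ≤ r :=
    resolventConst_mul_le_of_scaled hn (by positivity : 0 ≤ δ * V)
      (nonneg_of_mul_nonneg_right hX hδ) (nonneg_of_mul_nonneg_right hE (by positivity))
      (nonneg_of_mul_nonneg_right hR hscale) (le_of_mul_le_mul_left (by linarith) hscale)
      (by linarith) (le_of_mul_le_mul_left (by linarith) hκ) hbalance' hmultiplier'
  linarith [mul_le_mul_of_nonneg_left hscaled hscale.le]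

namespace SlipPair

variable {K ν κ d : ℝ} {w φ : ℝ → ℂ}

lemma multiplier_estimate (S : SlipPair K w φ) (hK : 1 ≤ K) (hν : 0 ≤ ν) (κ : ℝ) (hd : 0 < d) :
    |κ| * ((l2 (fun y => y • w y) ^ 2 + energy K φ) / 10) ≤
      (l2 (orrSommerfeld ν κ d K w φ) + ν * l2 (modalLaplacian K w)) *
        (10 * √d * l2 (deriv w) + 2 * l2 w) := by
  obtain ⟨v, hv, hnorm, hcoercive⟩ := S.exists_multiplier hK hd
  have hr := l2_nonneg (orrSommerfeld ν κ d K w φ)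
  have hΔ := l2_nonneg (modalLaplacian K w)
  calc _ ≤ |κ| * |l2Inner (rayleigh d w φ) v| := by
        gcongr
        exact hcoercive.trans (le_abs_self _)
    _ ≤ _ := (S.abs_l2Inner_rayleigh_le hν κ d hv).trans (by gcongr)

lemma resolvent_estimate_of_layer_width (S : SlipPair K w φ) (hK : 1 ≤ K) {δ : ℝ} (hδ : 0 < δ)
    (hκ : κ ≠ 0) (d : ℝ) :
    resolventConst * (δ ^ 2 * |κ|) * l2 w ≤ l2 (orrSommerfeld (δ ^ 4 * |κ|) κ d K w φ) := by
  have hκ' : 0 < |κ| := abs_pos.2 hκ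
  have hν : 0 ≤ δ ^ 4 * |κ| := by positivity
  have hdissipation : δ ^ 4 * |κ| * l2 (deriv w) ^ 2 ≤ δ ^ 4 * |κ| * energy K w := by
    gcongr
    exact le_add_of_nonneg_right (by positivity)
  exact resolventConst_mul_le_of_layer_width hδ hκ' (l2_nonneg _) (l2_nonneg _) (l2_nonneg _)
    (energy_nonneg (by linarith) φ) (l2_nonneg _)
    (hdissipation.trans (S.energy_vorticity_le _ κ d)) S.l2_vorticity_sq_le
    (S.modalLaplacian_sq_le _ κ d) (S.abs_l2Inner_rayleigh_self_le _ κ d)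
    (S.multiplier_estimate hK hν κ)

lemma resolvent_estimate (S : SlipPair K w φ) (hK : 1 ≤ K) (hν : 0 < ν) (hκ : κ ≠ 0) (d : ℝ) :
    resolventConst * √(ν * |κ|) * l2 w ≤ l2 (orrSommerfeld ν κ d K w φ) := by
  have hκ' : 0 < |κ| := abs_pos.2 hκ
  obtain ⟨δ, hδ, hδν⟩ : ∃ δ : ℝ, 0 < δ ∧ δ ^ 4 * |κ| = ν := by
    refine ⟨(ν / |κ|) ^ (1 / 4 : ℝ), by positivity, ?_⟩
    rw [← Real.rpow_mul_natCast (by positivity)]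
    norm_num
    field_simp
  have hsqrt : √(ν * |κ|) = δ ^ 2 * |κ| := by
    rw [← hδν, ← Real.sqrt_sq (by positivity : 0 ≤ δ ^ 2 * |κ|)]
    ring_nf
  rw [hsqrt, ← hδν]
  exact S.resolvent_estimate_of_layer_width hK hδ hκ d

lemma modified_resolvent_estimate (S : SlipPair K w φ) (hK : 1 ≤ K) (hν : 0 < ν) (hκ : κ ≠ 0)
    (d : ℝ) {ε : ℝ} (hε : 0 ≤ ε) (hε' : ε ≤ resolventConst / 2) :
    resolventConst / 2 * √(ν * |κ|) * l2 w ≤ l2 (modifiedOrrSommerfeld ν ε κ d K w φ) := by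
  have hw := S.contDiff_vorticity.continuous
  have hn := l2_nonneg w
  have htriangle := l2_add_le (g := fun y => (ε * √(ν * |κ|)) • w y)
    (S.continuous_modifiedOrrSommerfeld ν ε κ d) (by fun_prop)
  simp only [modifiedOrrSommerfeld, sub_add_cancel] at htriangle
  rw [l2_smul, abs_of_nonneg (by positivity : 0 ≤ ε * √(ν * |κ|))] at htriangle
  have hperturb : ε * √(ν * |κ|) * l2 w ≤ resolventConst / 2 * √(ν * |κ|) * l2 w := by gcongr
  linarith [S.resolvent_estimate hK hν hκ d]

lemma modified_energy_vorticity_le (S : SlipPair K w φ) (hK : 1 ≤ K) (hν : 0 < ν) (hκ : κ ≠ 0)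
    (d : ℝ) {ε : ℝ} (hε : 0 ≤ ε) (hε' : ε ≤ resolventConst / 2) :
    ν * energy K w ≤ 2 * (l2 (modifiedOrrSommerfeld ν ε κ d K w φ) * l2 w) := by
  have hw := S.contDiff_vorticity.continuous
  have hn := l2_nonneg w
  have hperturb : ε * √(ν * |κ|) * l2 w ^ 2 ≤
      l2 (modifiedOrrSommerfeld ν ε κ d K w φ) * l2 w := by
    calc ε * √(ν * |κ|) * l2 w ^ 2 ≤ resolventConst / 2 * √(ν * |κ|) * l2 w ^ 2 := by gcongr
      _ = resolventConst / 2 * √(ν * |κ|) * l2 w * l2 w := by ring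
      _ ≤ l2 (modifiedOrrSommerfeld ν ε κ d K w φ) * l2 w := by
          gcongr
          exact S.modified_resolvent_estimate hK hν hκ d hε hε'
  rw [S.energy_vorticity_eq ν ε κ d]
  linarith [l2Inner_le (S.continuous_modifiedOrrSommerfeld ν ε κ d) hw]

end SlipPair

end ResolventEstimate

section InitialValueProblem

variable {E : Type*} [NormedAddCommGroup E] [NormedSpace ℝ E] {f : ℝ → E → E} {a b : ℝ} {x : E}

/-- The Picard integral operator at `(a, x)` for `u' = f t u`, conjugated by the weight
`exp (-c (t - a))`: for large `c` it is a contraction on an interval of any length. -/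
def weightedPicard (f : ℝ → E → E) (c a : ℝ) (x : E) (z : ℝ → E) (t : ℝ) : E :=
  Real.exp (-(c * (t - a))) • (x + ∫ s in a..t, f s (Real.exp (c * (s - a)) • z s))

lemma continuous_picard_integrand (hf : Continuous fun p : ℝ × E => f p.1 p.2) (c a : ℝ)
    {z : ℝ → E} (hz : Continuous z) :
    Continuous fun s => f s (Real.exp (c * (s - a)) • z s) :=
  hf.comp (by fun_prop : Continuous fun s => (s, Real.exp (c * (s - a)) • z s))

lemma integral_mul_exp_two_mul (K a t : ℝ) :
    ∫ s in a..t, K * Real.exp (2 * K * (s - a)) = (Real.exp (2 * K * (t - a)) - 1) / 2 := by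
  have hderiv (s : ℝ) : HasDerivAt (fun s => Real.exp (2 * K * (s - a)) / 2)
      (K * Real.exp (2 * K * (s - a))) s := by
    refine (((((hasDerivAt_id' s).sub_const a).const_mul (2 * K)).exp).div_const 2).congr_deriv ?_
    ring
  rw [intervalIntegral.integral_eq_sub_of_hasDerivAt (fun s _ => hderiv s)
    (Continuous.intervalIntegrable (by fun_prop) _ _)]
  simp only [sub_self, mul_zero, Real.exp_zero]
  ring

lemma norm_weightedPicard_sub_le (hf : Continuous fun p : ℝ × E => f p.1 p.2) {K : NNReal}
    (hK : ∀ t ∈ Set.Icc a b, LipschitzWith K (f t)) {z z' : ℝ → E} (hz : Continuous z)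
    (hz' : Continuous z') {D : ℝ} (hD : ∀ t ∈ Set.Icc a b, ‖z t - z' t‖ ≤ D) {t : ℝ}
    (ht : t ∈ Set.Icc a b) :
    ‖weightedPicard f (2 * K) a x z t - weightedPicard f (2 * K) a x z' t‖ ≤ D / 2 := by
  have hD0 : 0 ≤ D := (norm_nonneg _).trans (hD t ht)
  have hcont := continuous_picard_integrand hf (2 * K) a hz
  have hcont' := continuous_picard_integrand hf (2 * K) a hz'
  have hintegral : ‖∫ s in a..t, f s (Real.exp (2 * K * (s - a)) • z s) -
      f s (Real.exp (2 * K * (s - a)) • z' s)‖ ≤ (Real.exp (2 * K * (t - a)) - 1) / 2 * D := by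
    rw [← integral_mul_exp_two_mul, ← intervalIntegral.integral_mul_const]
    refine intervalIntegral.norm_integral_le_of_norm_le ht.1
      (Filter.Eventually.of_forall fun s hs => ?_)
      (Continuous.intervalIntegrable (by fun_prop) _ _)
    have hs' : s ∈ Set.Icc a b := ⟨hs.1.le, hs.2.trans ht.2⟩
    refine ((hK s hs').norm_sub_le _ _).trans ?_
    rw [← smul_sub, norm_smul, Real.norm_of_nonneg (Real.exp_pos _).le, ← mul_assoc]
    gcongr
    exact hD s hs'
  rw [weightedPicard, weightedPicard, ← smul_sub, add_sub_add_left_eq_sub,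
    ← intervalIntegral.integral_sub (hcont.intervalIntegrable _ _) (hcont'.intervalIntegrable _ _),
    norm_smul, Real.norm_of_nonneg (Real.exp_pos _).le]
  calc _ ≤ Real.exp (-(2 * K * (t - a))) * ((Real.exp (2 * K * (t - a)) - 1) / 2 * D) := by gcongr
    _ = (1 - Real.exp (-(2 * K * (t - a)))) / 2 * D := by
        rw [Real.exp_neg]
        field_simp
    _ ≤ D / 2 := by nlinarith [Real.exp_pos (-(2 * K * (t - a)))]

lemma continuous_weightedPicard (hf : Continuous fun p : ℝ × E => f p.1 p.2) (c a : ℝ) (x : E)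
    {z : ℝ → E} (hz : Continuous z) : Continuous (weightedPicard f c a x z) := by
  have hprimitive := intervalIntegral.continuous_primitive (μ := volume)
    (fun s t => (continuous_picard_integrand hf c a hz).intervalIntegrable s t) a
  unfold weightedPicard
  fun_prop

lemma exists_eqOn_weightedPicard [CompleteSpace E] (hf : Continuous fun p : ℝ × E => f p.1 p.2)
    (hab : a ≤ b) {K : NNReal} (hK : ∀ t ∈ Set.Icc a b, LipschitzWith K (f t)) (x : E) :
    ∃ z : ℝ → E, Continuous z ∧ Set.EqOn (weightedPicard f (2 * K) a x z) z (Set.Icc a b) := by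
  let extend (z : C(Set.Icc a b, E)) (t : ℝ) : E := z (Set.projIcc a b hab t)
  have hextend (z : C(Set.Icc a b, E)) : Continuous (extend z) :=
    z.continuous.comp continuous_projIcc
  let Φ (z : C(Set.Icc a b, E)) : C(Set.Icc a b, E) :=
    ⟨fun t => weightedPicard f (2 * K) a x (extend z) t,
      (continuous_weightedPicard hf _ a x (hextend z)).comp continuous_subtype_val⟩
  have hΦ : ContractingWith (1 / 2) Φ := by
    refine ⟨by rw [← NNReal.coe_lt_coe]; norm_num, LipschitzWith.of_dist_le_mul fun z z' => ?_⟩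
    rw [ContinuousMap.dist_le (by positivity)]
    intro t
    rw [dist_eq_norm]
    refine (norm_weightedPicard_sub_le hf hK (hextend z) (hextend z') (fun s _ => ?_)
      t.2).trans_eq (?_ : dist z z' / 2 = _)
    · rw [← dist_eq_norm]
      exact ContinuousMap.dist_apply_le_dist _
    · push_cast
      ring
  obtain ⟨z, hz⟩ : ∃ z, Φ z = z := ⟨_, hΦ.fixedPoint_isFixedPt⟩
  refine ⟨extend z, hextend z, fun t ht => ?_⟩
  calc weightedPicard f (2 * K) a x (extend z) t = Φ z ⟨t, ht⟩ := rfl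
    _ = extend z t := by simp only [hz, extend, Set.projIcc_of_mem hab ht]

theorem exists_contDiff_one_deriv_eq_of_lipschitz [CompleteSpace E]
    (hf : Continuous fun p : ℝ × E => f p.1 p.2) (hab : a ≤ b) {K : NNReal}
    (hK : ∀ t ∈ Set.Icc a b, LipschitzWith K (f t)) (x : E) :
    ∃ u : ℝ → E, ContDiff ℝ 1 u ∧ u a = x ∧ ∀ t ∈ Set.Icc a b, deriv u t = f t (u t) := by
  obtain ⟨z, hz, hfixed⟩ := exists_eqOn_weightedPicard hf hab hK x
  have hcont := continuous_picard_integrand hf (2 * K) a hz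
  let u (t : ℝ) : E := x + ∫ s in a..t, f s (Real.exp (2 * K * (s - a)) • z s)
  have hderiv : deriv u = fun t => f t (Real.exp (2 * K * (t - a)) • z t) := funext fun t =>
    ((hcont.integral_hasStrictDerivAt a t).hasDerivAt.const_add x).deriv
  refine ⟨u, contDiff_one_iff_deriv.2 ⟨fun t =>
    ((hcont.integral_hasStrictDerivAt a t).hasDerivAt.const_add x).differentiableAt,
    hderiv ▸ hcont⟩, by simp [u], fun t ht => ?_⟩
  have hu : Real.exp (2 * K * (t - a)) • z t = u t := by
    rw [← hfixed ht, weightedPicard, smul_smul, ← Real.exp_add, add_neg_cancel, Real.exp_zero,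
      one_smul]
  rw [hderiv, ← hu]

theorem exists_contDiff_two_linear_ode [CompleteSpace E] {A : ℝ → E →L[ℝ] E} (hA : Continuous A)
    {h : ℝ → E} (hh : Continuous h) (hab : a ≤ b) (u₀ u₁ : E) :
    ∃ u : ℝ → E, ContDiff ℝ 2 u ∧ u a = u₀ ∧ deriv u a = u₁ ∧
      ∀ t ∈ Set.Icc a b, deriv (deriv u) t = A t (u t) + h t := by
  obtain ⟨M, hM⟩ := isCompact_Icc.exists_bound_of_continuousOn (s := Set.Icc a b) hA.continuousOn
  have hlipschitz : ∀ t ∈ Set.Icc a b, LipschitzWith (max 1 M.toNNReal)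
      fun p : E × E => (p.2, A t p.1 + h t) := fun t ht => by
    refine LipschitzWith.prodMk LipschitzWith.prod_snd ?_
    have hAt : LipschitzWith M.toNNReal (A t) :=
      (A t).lipschitz.weaken (NNReal.le_toNNReal_of_coe_le (hM t ht))
    simpa using! (hAt.comp LipschitzWith.prod_fst).add (LipschitzWith.const (h t))
  obtain ⟨p, hp, hp₀, hode⟩ := exists_contDiff_one_deriv_eq_of_lipschitz
    (by fun_prop) hab hlipschitz (u₀, u₁)
  have hfst : ∀ t ∈ Set.Icc a b, HasDerivAt (fun t => (p t).1) (p t).2 t := fun t ht => by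
    have : HasDerivAt (fun t => (p t).1) (deriv p t).1 t :=
      (hp.differentiable (by norm_num) t).hasDerivAt.fst
    rwa [hode t ht] at this
  have hsnd : ∀ t ∈ Set.Icc a b, deriv (fun t => (p t).2) t = A t (p t).1 + h t := fun t ht => by
    have : HasDerivAt (fun t => (p t).2) (deriv p t).2 t :=
      (hp.differentiable (by norm_num) t).hasDerivAt.snd
    rw [this.deriv, hode t ht]
  have hcont : Continuous fun t => (p t).2 := by fun_prop
  let u (t : ℝ) : E := u₀ + ∫ s in a..t, (p s).2
  have hu (t : ℝ) : HasDerivAt u (p t).2 t :=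
    (hcont.integral_hasStrictDerivAt a t).hasDerivAt.const_add u₀
  have hderiv : deriv u = fun t => (p t).2 := funext fun t => (hu t).deriv
  have hup : ∀ t ∈ Set.Icc a b, u t = (p t).1 := fun t ht => by
    have hftc := intervalIntegral.integral_eq_sub_of_hasDerivAt
      (fun s hs => hfst s (Set.uIcc_subset_Icc (Set.left_mem_Icc.2 hab) ht hs))
      (hcont.intervalIntegrable a t)
    simp only [u, hftc, hp₀, add_sub_cancel]
  refine ⟨u, ?_, by simp [u], by simp [hderiv, hp₀], fun t ht => ?_⟩
  · rw [show (2 : WithTop ℕ∞) = 1 + 1 by norm_num, contDiff_succ_iff_deriv, hderiv]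
    exact ⟨fun t => (hu t).differentiableAt, by simp, contDiff_snd.comp hp⟩
  · rw [hderiv, hsnd t ht, hup t ht]

end InitialValueProblem

section DirichletProblem

variable {E : Type*} [NormedAddCommGroup E] [NormedSpace ℝ E] {A : ℝ → E →L[ℝ] E} {a b : ℝ}

lemma exists_fundamental_solution [CompleteSpace E] (hA : Continuous A) (hab : a ≤ b) :
    ∃ Φ : ℝ → E →L[ℝ] E, ContDiff ℝ 2 Φ ∧ Φ a = 0 ∧ deriv Φ a = .id ℝ E ∧
      ∀ t ∈ Set.Icc a b, deriv (deriv Φ) t = (A t).comp (Φ t) := by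
  obtain ⟨Φ, hΦ, hΦa, hΦ'a, hode⟩ := exists_contDiff_two_linear_ode
    ((ContinuousLinearMap.compL ℝ E E E).continuous.comp hA) continuous_const hab 0 (.id ℝ E)
    (h := 0)
  exact ⟨Φ, hΦ, hΦa, hΦ'a, fun t ht => by simpa using hode t ht⟩

lemma deriv_clm_apply_const {Φ : ℝ → E →L[ℝ] E} (hΦ : ContDiff ℝ 1 Φ) (x : E) :
    deriv (fun t => Φ t x) = fun t => deriv Φ t x := funext fun t => by
  simpa using
    ((hΦ.differentiable (by norm_num) t).hasDerivAt.clm_apply (hasDerivAt_const t x)).deriv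

/-- The shooting map `Φ b`, with `Φ` the fundamental solution vanishing at `a`, is an injective
endomorphism of a finite-dimensional space, hence surjective. -/
theorem exists_dirichlet_solution_of_unique [FiniteDimensional ℝ E] (hA : Continuous A)
    (hab : a ≤ b)
    (hunique : ∀ u : ℝ → E, ContDiff ℝ 2 u → (∀ t ∈ Set.Icc a b, deriv (deriv u) t = A t (u t)) →
      u a = 0 → u b = 0 → deriv u a = 0)
    {h : ℝ → E} (hh : Continuous h) (α β : E) :
    ∃ u : ℝ → E, ContDiff ℝ 2 u ∧ u a = α ∧ u b = β ∧
      ∀ t ∈ Set.Icc a b, deriv (deriv u) t = A t (u t) + h t := by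
  have := FiniteDimensional.complete ℝ E
  obtain ⟨Φ, hΦ, hΦa, hΦ'a, hΦode⟩ := exists_fundamental_solution hA hab
  obtain ⟨u, hu, hua, -, huode⟩ := exists_contDiff_two_linear_ode hA hh hab α 0
  have hΦ₁ : ContDiff ℝ 1 (deriv Φ) := hΦ.iterate_deriv' 1 1
  have hu₁ : ContDiff ℝ 1 (deriv u) := hu.iterate_deriv' 1 1
  have hΦx (x : E) : ContDiff ℝ 2 fun t => Φ t x := hΦ.clm_apply contDiff_const
  have hderiv (x : E) : deriv (fun t => Φ t x) = fun t => deriv Φ t x :=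
    deriv_clm_apply_const (hΦ.of_le (by norm_num)) x
  have hΦ₁x (x : E) : ContDiff ℝ 1 fun t => deriv Φ t x := hΦ₁.clm_apply contDiff_const
  have hderiv₂ (x : E) : deriv (deriv fun t => Φ t x) = fun t => deriv (deriv Φ) t x := by
    rw [hderiv, deriv_clm_apply_const hΦ₁]
  have hinj : Function.Injective (Φ b) := (injective_iff_map_eq_zero _).2 fun x hx => by
    have hslope := hunique (fun t => Φ t x) (hΦx x)
      (fun t ht => by simp [hderiv₂, hΦode t ht]) (by simp [hΦa]) hx
    simpa [hderiv, hΦ'a] using hslope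
  obtain ⟨x, hx⟩ := (LinearMap.injective_iff_surjective (f := (Φ b).toLinearMap)).1 hinj (β - u b)
  have hderiv_add : deriv (fun t => u t + Φ t x) = fun t => deriv u t + deriv Φ t x :=
    funext fun t => by
      rw [deriv_fun_add (hu.differentiable (by norm_num) t)
        ((hΦx x).differentiable (by norm_num) t), hderiv]
  refine ⟨fun t => u t + Φ t x, hu.add (hΦx x), by simp [hua, hΦa], ?_, fun t ht => ?_⟩
  · exact (congrArg (u b + ·) hx).trans (add_sub_cancel _ _)
  · rw [hderiv_add, deriv_fun_add (hu₁.differentiable (by norm_num) t)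
      ((hΦ₁x x).differentiable (by norm_num) t),
      deriv_clm_apply_const hΦ₁]
    simp only [huode t ht, hΦode t ht, ContinuousLinearMap.comp_apply, map_add]
    abel

end DirichletProblem

section InhomogeneousProblem

variable {K ν ε κ d : ℝ} {w φ h : ℝ → ℂ} {u : ℝ → ℂ × ℂ}

lemma deriv_neg_one_eq_zero_of_energy_nonpos {f : ℝ → ℂ} (hK : 0 ≤ K) (hf : Continuous (deriv f))
    (h : energy K f ≤ 0) : deriv f (-1) = 0 := by
  have hsq : l2 (deriv f) ^ 2 ≤ 0 := (le_add_of_nonneg_right (by positivity)).trans h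
  exact eqOn_zero_of_l2_eq_zero hf (pow_eq_zero_iff two_ne_zero |>.1 (hsq.antisymm (sq_nonneg _)))
    (by norm_num)

lemma SlipPair.deriv_neg_one_eq_zero (S : SlipPair K w φ) (hK : 1 ≤ K) (hν : 0 < ν) (hκ : κ ≠ 0)
    (hε : 0 ≤ ε) (hε' : ε ≤ resolventConst / 2)
    (heq : Set.EqOn (modifiedOrrSommerfeld ν ε κ d K w φ) 0 (Set.Icc (-1) 1)) :
    deriv w (-1) = 0 ∧ deriv φ (-1) = 0 := by
  have hl2 : l2 w = 0 := by
    have hest := S.modified_resolvent_estimate hK hν hκ d hε hε'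
    rw [l2_congr heq] at hest
    have hzero : l2 0 = 0 := by simp [l2]
    have hpos : 0 < resolventConst / 2 * √(ν * |κ|) := by
      have := resolventConst_pos
      positivity
    rw [hzero] at hest
    exact (nonpos_of_mul_nonpos_right hest hpos).antisymm (l2_nonneg w)
  constructor
  · refine deriv_neg_one_eq_zero_of_energy_nonpos (K := K) (by linarith)
      S.continuous_deriv_vorticity ?_
    have henergy := S.energy_vorticity_le ν κ d
    rw [hl2, mul_zero] at henergy
    exact nonpos_of_mul_nonpos_right henergy hν
  · refine deriv_neg_one_eq_zero_of_energy_nonpos (K := K) (by linarith)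
      S.continuous_deriv_stream ?_
    have henergy := neg_l2Inner_le S.contDiff_stream.continuous S.contDiff_vorticity.continuous
    rwa [S.l2Inner_stream_vorticity, neg_neg, hl2, mul_zero] at henergy

/-- The coefficients of the second-order system `u'' = A u` that the homogeneous equations
`modifiedOrrSommerfeld ν ε κ d K w φ = 0`, `modalLaplacian K φ = w` become for `u = (φ, w)`. -/
def orrSommerfeldSystem (ν ε κ d K y : ℝ) : ℂ × ℂ →L[ℝ] ℂ × ℂ :=
  LinearMap.toContinuousLinearMap
    { toFun := fun p => (p.2 + K • p.1,
        K • p.2 + ν⁻¹ • (κ • (Complex.I * ((d - y ^ 2) • p.2 + (2 : ℝ) • p.1)) -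
          (ε * √(ν * |κ|)) • p.2))
      map_add' := fun p q => by
        ext1 <;> simp only [Prod.fst_add, Prod.snd_add, smul_add, mul_add, smul_sub] <;> abel
      map_smul' := fun c p => by
        ext1 <;> simp only [Prod.smul_fst, Prod.smul_snd, Complex.real_smul, RingHom.id_apply] <;>
          ring }

lemma orrSommerfeldSystem_apply (ν ε κ d K y : ℝ) (p : ℂ × ℂ) :
    orrSommerfeldSystem ν ε κ d K y p = (p.2 + K • p.1,
      K • p.2 + ν⁻¹ • (κ • (Complex.I * ((d - y ^ 2) • p.2 + (2 : ℝ) • p.1)) -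
        (ε * √(ν * |κ|)) • p.2)) := rfl

lemma continuous_orrSommerfeldSystem (ν ε κ d K : ℝ) :
    Continuous (orrSommerfeldSystem ν ε κ d K) :=
  continuous_clm_apply.2 fun p => by
    simp only [orrSommerfeldSystem_apply]
    fun_prop

lemma deriv_fst_snd (hu : ContDiff ℝ 1 u) :
    (deriv fun y => (u y).1) = (fun y => (deriv u y).1) ∧
      (deriv fun y => (u y).2) = fun y => (deriv u y).2 := by
  have hderiv (y : ℝ) : HasDerivAt u (deriv u y) y := (hu.differentiable_one y).hasDerivAt
  have hfst (y : ℝ) : HasDerivAt (fun y => (u y).1) (deriv u y).1 y := (hderiv y).fst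
  have hsnd (y : ℝ) : HasDerivAt (fun y => (u y).2) (deriv u y).2 y := (hderiv y).snd
  exact ⟨funext fun y => (hfst y).deriv, funext fun y => (hsnd y).deriv⟩

lemma deriv_deriv_fst_snd (hu : ContDiff ℝ 2 u) :
    (deriv (deriv fun y => (u y).1)) = (fun y => (deriv (deriv u) y).1) ∧
      (deriv (deriv fun y => (u y).2)) = fun y => (deriv (deriv u) y).2 := by
  obtain ⟨hfst, hsnd⟩ := deriv_fst_snd (hu.of_le (by norm_num))
  rw [hfst, hsnd]
  exact deriv_fst_snd (hu.iterate_deriv' 1 1)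

lemma slipPair_of_system (hν : ν ≠ 0) (hu : ContDiff ℝ 2 u) (hl : u (-1) = 0) (hr : u 1 = 0)
    (hode : ∀ y ∈ Set.Icc (-1 : ℝ) 1, deriv (deriv u) y =
      orrSommerfeldSystem ν ε κ d K y (u y) + (0, -ν⁻¹ • h y)) :
    SlipPair K (fun y => (u y).2) (fun y => (u y).1) ∧
      Set.EqOn (modifiedOrrSommerfeld ν ε κ d K (fun y => (u y).2) (fun y => (u y).1)) h
        (Set.Icc (-1) 1) := by
  refine ⟨⟨contDiff_snd.comp hu, contDiff_fst.comp hu, fun y hy => ?_, by simp [hl], by simp [hr],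
    by simp [hl], by simp [hr]⟩, fun y hy => ?_⟩
  · simp only [modalLaplacian, (deriv_deriv_fst_snd hu).1, hode y hy, orrSommerfeldSystem_apply,
      Prod.fst_add, add_zero, add_sub_cancel_right]
  · have hν' : (ν : ℂ) ≠ 0 := Complex.ofReal_ne_zero.2 hν
    simp only [modifiedOrrSommerfeld, orrSommerfeld, rayleigh, modalLaplacian,
      (deriv_deriv_fst_snd hu).2, hode y hy, orrSommerfeldSystem_apply, Prod.snd_add,
      Complex.real_smul]
    push_cast
    field_simp
    ring

theorem exists_slipPair_eqOn_modifiedOrrSommerfeld (hK : 1 ≤ K) (hν : 0 < ν) (hκ : κ ≠ 0) (d : ℝ)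
    (hε : 0 ≤ ε) (hε' : ε ≤ resolventConst / 2) (hh : Continuous h) :
    ∃ w φ, SlipPair K w φ ∧
      Set.EqOn (modifiedOrrSommerfeld ν ε κ d K w φ) h (Set.Icc (-1) 1) := by
  have hA := continuous_orrSommerfeldSystem ν ε κ d K
  have hunique (u : ℝ → ℂ × ℂ) (hu : ContDiff ℝ 2 u)
      (hode : ∀ y ∈ Set.Icc (-1 : ℝ) 1,
        deriv (deriv u) y = orrSommerfeldSystem ν ε κ d K y (u y))
      (hl : u (-1) = 0) (hr : u 1 = 0) : deriv u (-1) = 0 := by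
    obtain ⟨S, heq⟩ := slipPair_of_system (K := K) (ε := ε) (κ := κ) (d := d) (h := 0) hν.ne'
      hu hl hr fun y hy => by simp [hode y hy]
    obtain ⟨hsnd, hfst⟩ := S.deriv_neg_one_eq_zero hK hν hκ hε hε' heq
    rw [(deriv_fst_snd (hu.of_le (by norm_num))).2] at hsnd
    rw [(deriv_fst_snd (hu.of_le (by norm_num))).1] at hfst
    exact Prod.ext hfst hsnd
  obtain ⟨u, hu, hl, hr, hode⟩ := exists_dirichlet_solution_of_unique hA (by norm_num) hunique
    (h := fun y => (0, -ν⁻¹ • h y)) (by fun_prop) 0 0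
  exact ⟨_, _, slipPair_of_system hν.ne' hu hl hr hode⟩

end InhomogeneousProblem

section DualNorm

variable {k₁ k₃ : ℤ} {g F G : ℝ → ℂ}

lemma one_le_kabs_sq (hk : 1 ≤ |k₁|) (k₃ : ℤ) : 1 ≤ kabs k₁ k₃ ^ 2 := by
  have hk' : (1 : ℝ) ≤ |(k₁ : ℝ)| := by exact_mod_cast hk
  rw [kabs, Real.sq_sqrt (by positivity), ← sq_abs (k₁ : ℝ)]
  nlinarith [sq_nonneg (k₃ : ℝ)]

lemma hk_nonneg (k₁ k₃ : ℤ) (f : ℝ → ℂ) : 0 ≤ hk k₁ k₃ f := Real.sqrt_nonneg _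

lemma hk_sq (k₁ k₃ : ℤ) (f : ℝ → ℂ) : hk k₁ k₃ f ^ 2 = energy (kabs k₁ k₃ ^ 2) f := by
  rw [hk, ← l2_sq, ← l2_sq, energy, Real.sq_sqrt (by positivity)]

lemma hk_smul (k₁ k₃ : ℤ) (c : ℝ) (f : ℝ → ℂ) :
    hk k₁ k₃ (fun y => c • f y) = |c| * hk k₁ k₃ f := by
  have hderiv : deriv (fun y => c • f y) = fun y => c • deriv f y :=
    funext fun y => deriv_fun_const_smul_field c f
  refine (pow_left_inj₀ (hk_nonneg _ _ _) (by have := hk_nonneg k₁ k₃ f; positivity)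
    two_ne_zero).1 ?_
  rw [mul_pow, hk_sq, hk_sq, energy, energy, hderiv, l2_smul, l2_smul]
  ring

lemma l2_deriv_le_hk (k₁ k₃ : ℤ) (f : ℝ → ℂ) : l2 (deriv f) ≤ hk k₁ k₃ f := by
  refine le_of_sq_le_sq ?_ (hk_nonneg _ _ _)
  rw [hk_sq, energy]
  exact le_add_of_nonneg_right (by positivity)

lemma l2_le_hk (hk₁ : 1 ≤ |k₁|) (k₃ : ℤ) (f : ℝ → ℂ) : l2 f ≤ hk k₁ k₃ f := by
  refine le_of_sq_le_sq ?_ (hk_nonneg _ _ _)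
  rw [hk_sq, energy]
  nlinarith [one_le_kabs_sq hk₁ k₃, sq_nonneg (l2 (deriv f)), sq_nonneg (l2 f)]

lemma norm_integral_mul_conj_le (hF : Continuous F) (hg : Continuous g) :
    ‖∫ y in (-1 : ℝ)..1, F y * starRingEnd ℂ (g y)‖ ≤ l2 F * l2 g := by
  have hnorm (f : ℝ → ℂ) : l2 (fun y => (‖f y‖ : ℂ)) = l2 f := by
    simp only [l2, Complex.norm_real, norm_norm]
  calc ‖∫ y in (-1 : ℝ)..1, F y * starRingEnd ℂ (g y)‖
      ≤ ∫ y in (-1 : ℝ)..1, ‖F y * starRingEnd ℂ (g y)‖ :=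
        intervalIntegral.norm_integral_le_integral_norm (by norm_num)
    _ = l2Inner (fun y => (‖F y‖ : ℂ)) (fun y => (‖g y‖ : ℂ)) := by
        simp [l2Inner, Complex.inner, mul_comm]
    _ ≤ l2 F * l2 g := by
        rw [← hnorm F, ← hnorm g]
        exact l2Inner_le (by fun_prop) (by fun_prop)

lemma l2Inner_le_norm_integral_mul_conj (hF : Continuous F) (hg : Continuous g) :
    l2Inner F g ≤ ‖∫ y in (-1 : ℝ)..1, F y * starRingEnd ℂ (g y)‖ := by
  have hint : IntervalIntegrable (fun y => F y * starRingEnd ℂ (g y)) volume (-1) 1 :=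
    (hF.mul (Complex.continuous_conj.comp hg)).intervalIntegrable _ _
  have hre : l2Inner F g = (∫ y in (-1 : ℝ)..1, F y * starRingEnd ℂ (g y)).re := by
    rw [← Complex.reCLM_apply, ← ContinuousLinearMap.intervalIntegral_comp_comm _ hint,
      l2Inner_comm]
    simp only [l2Inner, Complex.inner, Complex.reCLM_apply]
  exact hre.trans_le (Complex.re_le_norm _)

lemma norm_integral_mul_conj_le_hm1 (hk₁ : 1 ≤ |k₁|) (hF : Continuous F) (hg : ContDiff ℝ 1 g)
    (hl : g (-1) = 0) (hr : g 1 = 0) (hle : hk k₁ k₃ g ≤ 1) :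
    ‖∫ y in (-1 : ℝ)..1, F y * starRingEnd ℂ (g y)‖ ≤ hm1 k₁ k₃ F := by
  refine le_csSup ⟨l2 F, ?_⟩ ⟨g, hg, hl, hr, hle, rfl⟩
  rintro _ ⟨f, hf, -, -, hfle, rfl⟩
  exact (norm_integral_mul_conj_le hF hf.continuous).trans
    (mul_le_of_le_one_right (l2_nonneg F) ((l2_le_hk hk₁ k₃ f).trans hfle))

lemma l2Inner_le_hm1_mul_hk (hk₁ : 1 ≤ |k₁|) (k₃ : ℤ) (hF : Continuous F) (hg : ContDiff ℝ 1 g)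
    (hl : g (-1) = 0) (hr : g 1 = 0) : l2Inner F g ≤ hm1 k₁ k₃ F * hk k₁ k₃ g := by
  rcases (hk_nonneg k₁ k₃ g).eq_or_lt with hzero | hpos
  · have hl2 : l2 g = 0 := (hzero ▸ l2_le_hk hk₁ k₃ g).antisymm (l2_nonneg g)
    simpa only [← hzero, hl2, mul_zero] using l2Inner_le hF hg.continuous
  · have hc : ContDiff ℝ 1 fun y => (hk k₁ k₃ g)⁻¹ • g y := by fun_prop
    have hnormalized : l2Inner F (fun y => (hk k₁ k₃ g)⁻¹ • g y) ≤ hm1 k₁ k₃ F :=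
      (l2Inner_le_norm_integral_mul_conj hF hc.continuous).trans
        (norm_integral_mul_conj_le_hm1 hk₁ hF hc (by simp [hl]) (by simp [hr])
          (by rw [hk_smul, abs_of_pos (inv_pos.2 hpos), inv_mul_cancel₀ hpos.ne']))
    rwa [l2Inner_smul_right, inv_mul_le_iff₀ hpos, mul_comm] at hnormalized

lemma hm1_nonneg (k₁ k₃ : ℤ) (F : ℝ → ℂ) : 0 ≤ hm1 k₁ k₃ F :=
  Real.sSup_nonneg (by rintro _ ⟨g, -, -, -, -, rfl⟩; exact norm_nonneg _)

lemma hm1_congr (k₁ k₃ : ℤ) (h : Set.EqOn F G (Set.Icc (-1) 1)) : hm1 k₁ k₃ F = hm1 k₁ k₃ G := by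
  have hpairing (g : ℝ → ℂ) : ∫ y in (-1 : ℝ)..1, F y * starRingEnd ℂ (g y) =
      ∫ y in (-1 : ℝ)..1, G y * starRingEnd ℂ (g y) :=
    integral_congr_Icc (by norm_num) fun y hy => by simp only [h hy]
  simp only [hm1, hpairing]

end DualNorm

section DualEstimate

variable {ν ε : ℝ} {k₁ k₃ : ℤ} {w φ : ℝ → ℂ}

namespace SlipPair

/-- Duality: test the equation of `w` against the solution `v` of the adjoint problem with
right-hand side `w`, and bound `‖v‖_{H¹_k}` by the energy identity for `v`. -/
lemma l2_sq_le_hm1_sq (S : SlipPair (kabs k₁ k₃ ^ 2) w φ) (hν : 0 < ν) (hε : 0 ≤ ε)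
    (hε' : ε ≤ resolventConst / 2) (hk₁ : 1 ≤ |k₁|) (d : ℝ) :
    resolventConst / 2 * (ν * √(ν * |(k₁ : ℝ)|)) * l2 w ^ 2 ≤
      2 * hm1 k₁ k₃ (modifiedOrrSommerfeld ν ε k₁ d (kabs k₁ k₃ ^ 2) w φ) ^ 2 := by
  set D := hm1 k₁ k₃ (modifiedOrrSommerfeld ν ε k₁ d (kabs k₁ k₃ ^ 2) w φ)
  set c := resolventConst / 2
  set s := √(ν * |(k₁ : ℝ)|)
  have hc : 0 < c := half_pos resolventConst_pos
  have hK := one_le_kabs_sq hk₁ k₃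
  have hκ : (k₁ : ℝ) ≠ 0 := Int.cast_ne_zero.2 (abs_pos.1 (by omega))
  have hw := S.contDiff_vorticity.continuous
  have hn := l2_nonneg w
  obtain ⟨v, χ, T, heq⟩ :=
    exists_slipPair_eqOn_modifiedOrrSommerfeld hK hν (neg_ne_zero.2 hκ) d hε hε' hw
  have hresolvent : c * s * l2 v ≤ l2 w := by
    have h := T.modified_resolvent_estimate hK hν (neg_ne_zero.2 hκ) d hε hε'
    rwa [abs_neg, l2_congr heq] at h
  have hduality : l2 w ^ 2 ≤ D * hk k₁ k₃ v := by
    rw [← l2Inner_self, ← l2Inner_congr_right w heq, ← S.l2Inner_modifiedOrrSommerfeld_adjoint T]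
    exact l2Inner_le_hm1_mul_hk hk₁ k₃ (S.continuous_modifiedOrrSommerfeld ν ε k₁ d)
      (T.contDiff_vorticity.of_le (by norm_num)) T.vorticity_neg_one T.vorticity_one
  have henergy : ν * hk k₁ k₃ v ^ 2 ≤ 2 * (l2 w * l2 v) := by
    have h := T.modified_energy_vorticity_le hK hν (neg_ne_zero.2 hκ) d hε hε'
    rwa [← hk_sq, l2_congr heq] at h
  have hpow : c * (ν * s) * l2 w ^ 2 * l2 w ^ 2 ≤ 2 * D ^ 2 * l2 w ^ 2 := by
    calc c * (ν * s) * l2 w ^ 2 * l2 w ^ 2 = c * (ν * s) * (l2 w ^ 2) ^ 2 := by ring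
      _ ≤ c * (ν * s) * (D * hk k₁ k₃ v) ^ 2 := by gcongr
      _ = D ^ 2 * (c * s) * (ν * hk k₁ k₃ v ^ 2) := by ring
      _ ≤ D ^ 2 * (c * s) * (2 * (l2 w * l2 v)) := by gcongr
      _ = 2 * D ^ 2 * l2 w * (c * s * l2 v) := by ring
      _ ≤ 2 * D ^ 2 * l2 w * l2 w := by gcongr
      _ = 2 * D ^ 2 * l2 w ^ 2 := by ring
  rcases hn.eq_or_lt with hzero | hpos
  · rw [← hzero]
    simp only [ne_eq, OfNat.ofNat_ne_zero, not_false_eq_true, zero_pow, mul_zero]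
    positivity
  · exact le_of_mul_le_mul_right hpow (by positivity)

lemma hk_vorticity_le_hm1 (S : SlipPair (kabs k₁ k₃ ^ 2) w φ) (hν : 0 < ν) (hε : 0 ≤ ε)
    (hε' : ε ≤ resolventConst / 2) (hk₁ : 1 ≤ |k₁|) (d : ℝ) :
    ν * hk k₁ k₃ w ≤ 2 * hm1 k₁ k₃ (modifiedOrrSommerfeld ν ε k₁ d (kabs k₁ k₃ ^ 2) w φ) := by
  have hpairing := l2Inner_le_hm1_mul_hk hk₁ k₃ (S.continuous_modifiedOrrSommerfeld ν ε k₁ d)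
    (S.contDiff_vorticity.of_le (by norm_num)) S.vorticity_neg_one S.vorticity_one
  have hl2 := S.l2_sq_le_hm1_sq hν hε hε' hk₁ d
  have hD := hm1_nonneg k₁ k₃ (modifiedOrrSommerfeld ν ε k₁ d (kabs k₁ k₃ ^ 2) w φ)
  have henergy := S.energy_vorticity_eq ν ε k₁ d
  rw [← hk_sq] at henergy
  set D := hm1 k₁ k₃ (modifiedOrrSommerfeld ν ε k₁ d (kabs k₁ k₃ ^ 2) w φ)
  set s := √(ν * |(k₁ : ℝ)|)
  have hε_term : ε * (ν * s) * l2 w ^ 2 ≤ 2 * D ^ 2 := hl2.trans' (by gcongr)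
  have hquadratic : (ν * hk k₁ k₃ w) ^ 2 ≤ D * (ν * hk k₁ k₃ w) + 2 * D ^ 2 := by
    calc (ν * hk k₁ k₃ w) ^ 2 = ν * (ν * hk k₁ k₃ w ^ 2) := by ring
      _ ≤ ν * (D * hk k₁ k₃ w + ε * s * l2 w ^ 2) := by
          rw [henergy]
          gcongr
      _ ≤ D * (ν * hk k₁ k₃ w) + 2 * D ^ 2 := by linarith
  have hH : 0 ≤ ν * hk k₁ k₃ w := mul_nonneg hν.le (hk_nonneg _ _ _)
  nlinarith

end SlipPair

lemma rpow_mul_rpow_sq {x : ℝ} (hν : 0 < ν) (hx : 0 ≤ x) :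
    (ν ^ ((3 : ℝ) / 4) * x ^ ((1 : ℝ) / 4)) ^ 2 = ν * √(ν * x) := by
  rw [mul_pow, ← Real.rpow_mul_natCast hν.le, ← Real.rpow_mul_natCast hx, Real.sqrt_mul hν.le,
    Real.sqrt_eq_rpow, Real.sqrt_eq_rpow, ← mul_assoc, ← Real.rpow_one_add' hν.le (by norm_num)]
  norm_num

lemma SlipPair.l2_vorticity_le_hm1 (S : SlipPair (kabs k₁ k₃ ^ 2) w φ) (hν : 0 < ν) (hε : 0 ≤ ε)
    (hε' : ε ≤ resolventConst / 2) (hk₁ : 1 ≤ |k₁|) (d : ℝ) :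
    ν ^ ((3 : ℝ) / 4) * |(k₁ : ℝ)| ^ ((1 : ℝ) / 4) * l2 w ≤
      4 / resolventConst *
        hm1 k₁ k₃ (modifiedOrrSommerfeld ν ε k₁ d (kabs k₁ k₃ ^ 2) w φ) := by
  have hl2 := S.l2_sq_le_hm1_sq hν hε hε' hk₁ d
  have hD := hm1_nonneg k₁ k₃ (modifiedOrrSommerfeld ν ε k₁ d (kabs k₁ k₃ ^ 2) w φ)
  have hc := resolventConst_pos
  have hc1 : resolventConst ≤ 1 := by norm_num [resolventConst]
  refine le_of_sq_le_sq ?_ (by positivity)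
  rw [mul_pow, rpow_mul_rpow_sq hν (abs_nonneg _), mul_pow, div_pow]
  set D := hm1 k₁ k₃ (modifiedOrrSommerfeld ν ε k₁ d (kabs k₁ k₃ ^ 2) w φ)
  calc ν * √(ν * |(k₁ : ℝ)|) * l2 w ^ 2
      = 2 / resolventConst * (resolventConst / 2 * (ν * √(ν * |(k₁ : ℝ)|)) * l2 w ^ 2) := by
        field_simp
    _ ≤ 2 / resolventConst * (2 * D ^ 2) := by gcongr
    _ = 4 * resolventConst / resolventConst ^ 2 * D ^ 2 := by
        field_simp
        ring
    _ ≤ 4 ^ 2 / resolventConst ^ 2 * D ^ 2 := by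
        gcongr
        linarith

end DualEstimate

section SlipProblem

variable {ν ε lam : ℝ} {k₁ k₃ : ℤ} {w φ F : ℝ → ℂ}

lemma OSslipE.slipPair (h : OSslipE ν k₁ k₃ lam ε w φ F) : SlipPair (kabs k₁ k₃ ^ 2) w φ := by
  obtain ⟨hw, hφ, -, hstream, hφl, hφr, hφl'', hφr''⟩ := h
  refine ⟨hw, hφ, fun y hy => ?_, ?_, ?_, hφl, hφr⟩
  · rw [← hstream y hy, modalLaplacian, Complex.real_smul, Complex.ofReal_pow]
  · rw [← hstream (-1) (by norm_num), hφl'', hφl, mul_zero, sub_zero]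
  · rw [← hstream 1 (by norm_num), hφr'', hφr, mul_zero, sub_zero]

lemma OSslipE.eqOn_modifiedOrrSommerfeld (h : OSslipE ν k₁ k₃ lam ε w φ F) :
    Set.EqOn F (modifiedOrrSommerfeld ν ε k₁ (1 - lam) (kabs k₁ k₃ ^ 2) w φ)
      (Set.Icc (-1) 1) := fun y hy => by
  rw [← h.2.2.1 y hy]
  simp only [modifiedOrrSommerfeld, orrSommerfeld, modalLaplacian, rayleigh, Complex.real_smul]
  push_cast
  ring

theorem OS_slip_resolvent_Hm1_general :
    ∃ ε₀ C : ℝ, 0 < ε₀ ∧ ε₀ < 1 ∧ 0 < C ∧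
      ∀ (ν ε lam : ℝ) (k₁ k₃ : ℤ) (w φ F : ℝ → ℂ),
        0 < ν → 0 ≤ ε → ε ≤ ε₀ → 1 ≤ |k₁| → OSslipE ν k₁ k₃ lam ε w φ F →
        ν * l2 (deriv w) + ν ^ ((3 : ℝ) / 4) * |(k₁ : ℝ)| ^ ((1 : ℝ) / 4) * l2 w
          ≤ C * hm1 k₁ k₃ F := by
  have hc := resolventConst_pos
  refine ⟨resolventConst / 2, 2 + 4 / resolventConst, by positivity, by norm_num [resolventConst],
    by positivity, fun ν ε lam k₁ k₃ w φ F hν hε hε' hk₁ h => ?_⟩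
  rw [hm1_congr k₁ k₃ h.eqOn_modifiedOrrSommerfeld, add_mul]
  refine add_le_add ?_ (h.slipPair.l2_vorticity_le_hm1 hν hε hε' hk₁ (1 - lam))
  calc ν * l2 (deriv w) ≤ ν * hk k₁ k₃ w := by
        gcongr
        exact l2_deriv_le_hk k₁ k₃ w
    _ ≤ _ := h.slipPair.hk_vorticity_le_hm1 hν hε hε' hk₁ (1 - lam)

end SlipProblem

/-- **Resolvent estimate with Navier-slip boundary condition, `F ∈ H⁻¹_k`**
(Proposition 2.9): `ν‖w'‖_{L²} + ν^{3/4}|k₁|^{1/4}‖w‖_{L²} ≤ C‖F‖_{H⁻¹_k}`. -/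
theorem OS_slip_resolvent_Hm1 :
    ∃ ε₀ ν₀ C : ℝ, 0 < ε₀ ∧ ε₀ < 1 ∧ 0 < ν₀ ∧ ν₀ < 1 ∧ 0 < C ∧
      ∀ (ν ε lam : ℝ) (k₁ k₃ : ℤ) (w φ F : ℝ → ℂ),
        0 < ν → ν ≤ ν₀ → 0 < ε → ε ≤ ε₀ → 1 ≤ |k₁| →
        IntervalIntegrable (fun y => ‖F y‖ ^ 2) MeasureTheory.volume (-1) 1 →
        OSslipE ν k₁ k₃ (lam : ℂ) ε w φ F →
        ν * l2 (deriv w) + ν ^ ((3:ℝ)/4) * |(k₁ : ℝ)| ^ ((1:ℝ)/4) * l2 w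
          ≤ C * hm1 k₁ k₃ F := by
  obtain ⟨ε₀, C, hε₀, hε₀', hC, hest⟩ := OS_slip_resolvent_Hm1_general
  exact ⟨ε₀, 1 / 2, C, hε₀, hε₀', by norm_num, by norm_num, hC,
    fun ν ε lam k₁ k₃ w φ F hν _ hε hε' hk₁ _ h => hest ν ε lam k₁ k₃ w φ F hν hε.le hε' hk₁ h⟩

end
end

section
/- There exist constants ε₀, ν₀ ∈ (0,1) and C > 0, independent of ν, k, λ and ε, such that for every 0 < ν ≤ ν₀, every 0 ≤ ε ≤ ε₀, every k = (k₁,k₃) ∈ ℤ² with |k₁| ≥ 1, every λ ∈ ℝ, every F₁ ∈ L²(I), and every solution w ∈ H²(I) of −ν(∂_y² − |k|²)w + i k₁(1−y²−λ)w − ε(ν|k₁|)^{1/2} w = F₁ on I with w(±1) = 0, one has ν^{3/4}|k₁|^{1/4} ‖(∂_y,|k|)w‖_{L²} + ν^{1/2}|k₁|^{1/2} ‖w‖_{L²} ≤ C ‖F₁‖_{L²}. -/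
open Real MeasureTheory

noncomputable section

/-- The Orr–Sommerfeld equation without nonlocal term:
`-ν(∂_y²-|k|²)w + ik₁(1-y²-λ)w - ε(ν|k₁|)^{1/2}w = F₁` on `[-1,1]`,
with `w(±1) = 0`. -/
def OSlocal (ν : ℝ) (k₁ k₃ : ℤ) (lam ε : ℝ) (w F : ℝ → ℂ) : Prop :=
  ContDiff ℝ 2 w ∧
  (∀ y ∈ Set.Icc (-1:ℝ) 1,
    -(ν : ℂ) * (deriv (deriv w) y - ((kabs k₁ k₃ : ℝ) : ℂ) ^ 2 * w y) +
      Complex.I * (k₁ : ℂ) * ((1 - (y : ℂ) ^ 2 - (lam : ℂ)) * w y) -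
      ((ε * Real.sqrt (ν * |(k₁ : ℝ)|) : ℝ) : ℂ) * w y = F y) ∧
  w (-1) = 0 ∧ w 1 = 0

/-! Write `α = k₁` and let `N`, `H`, `R` be the norms of `w`, `(∂_y, |k|)w` and `F₁`. The real part
of the pairing of the equation with `w` gives `νH² ≤ ε(ν|α|)^{1/2}N² + NR`, so it remains to bound
`N` by `R` and `H`. Pairing with `iφw`, where `φ` is a smoothed sign of `α(1 - y² - λ)`, controls
`w` away from the turning points, at the price of the commutator `νφ'`. Within the layers of width
`δ = (ν/|α|)^{1/4}` around the turning points, the vanishing integral of `(ψ‖w‖²)'` takes over, `ψ'`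
being of size `|α|δ²` there. A product and a sum of arctangents serve as `φ` and `ψ` for all `λ` at
once, because `t arctan t ≥ t²/(1 + t²)`. The outcome is `|α|δ²N ≲ R + |α|δ³H` with `ν = |α|δ⁴`, and
for small `ε` the two inequalities close by absorption. -/

open Set
open scoped InnerProductSpace

section IntervalNorms

variable {E F : Type*} [NormedAddCommGroup E] [NormedAddCommGroup F] {a b : ℝ}

/-- The `L²(a, b)` norm; `l2` is the case `(a, b) = (-1, 1)`. -/
def intervalL2Norm (a b : ℝ) (f : ℝ → E) : ℝ := √(∫ y in a..b, ‖f y‖ ^ 2)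

/-- The norm `‖(∂_y, κ)f‖_{L²(a, b)}`; `hk` is the case `κ = |k|`, `(a, b) = (-1, 1)`. -/
def intervalH1Norm [NormedSpace ℝ E] (a b κ : ℝ) (f : ℝ → E) : ℝ :=
  √((∫ y in a..b, ‖deriv f y‖ ^ 2) + κ ^ 2 * ∫ y in a..b, ‖f y‖ ^ 2)

theorem intervalL2Norm_nonneg (f : ℝ → E) : 0 ≤ intervalL2Norm a b f := sqrt_nonneg _

theorem integral_norm_sq_nonneg (hab : a ≤ b) (f : ℝ → E) : 0 ≤ ∫ y in a..b, ‖f y‖ ^ 2 :=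
  intervalIntegral.integral_nonneg hab fun _ _ => sq_nonneg _

theorem intervalL2Norm_sq (hab : a ≤ b) (f : ℝ → E) :
    intervalL2Norm a b f ^ 2 = ∫ y in a..b, ‖f y‖ ^ 2 :=
  sq_sqrt (integral_norm_sq_nonneg hab f)

theorem intervalL2Norm_congr (hab : a ≤ b) {f g : ℝ → E} (h : EqOn f g (Icc a b)) :
    intervalL2Norm a b f = intervalL2Norm a b g :=
  congrArg sqrt (intervalIntegral.integral_congr fun y hy => by
    simp only [h (uIcc_of_le hab ▸ hy)])

theorem intervalH1Norm_sq [NormedSpace ℝ E] (hab : a ≤ b) (κ : ℝ) (f : ℝ → E) :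
    intervalH1Norm a b κ f ^ 2 =
      intervalL2Norm a b (deriv f) ^ 2 + κ ^ 2 * intervalL2Norm a b f ^ 2 := by
  rw [intervalL2Norm_sq hab, intervalL2Norm_sq hab]
  exact sq_sqrt (add_nonneg (integral_norm_sq_nonneg hab _)
    (mul_nonneg (sq_nonneg κ) (integral_norm_sq_nonneg hab f)))

theorem intervalL2Norm_deriv_le_intervalH1Norm [NormedSpace ℝ E] (hab : a ≤ b) (κ : ℝ)
    (f : ℝ → E) : intervalL2Norm a b (deriv f) ≤ intervalH1Norm a b κ f :=
  sqrt_le_sqrt (le_add_of_nonneg_right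
    (mul_nonneg (sq_nonneg κ) (integral_norm_sq_nonneg hab f)))

theorem memLp_two_Ioc_of_continuous {f : ℝ → E} (hf : Continuous f) :
    MemLp f 2 (volume.restrict (Ioc a b)) :=
  (memLp_two_iff_integrable_sq_norm
    (hf.continuousOn.aestronglyMeasurable measurableSet_Ioc)).2
    ((hf.norm.pow 2).continuousOn.integrableOn_Icc.mono_set Ioc_subset_Icc_self)

theorem integral_norm_mul_norm_le (hab : a ≤ b) {f : ℝ → E} {g : ℝ → F}
    (hf : MemLp f 2 (volume.restrict (Ioc a b))) (hg : MemLp g 2 (volume.restrict (Ioc a b))) :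
    ∫ y in a..b, ‖f y‖ * ‖g y‖ ≤ intervalL2Norm a b f * intervalL2Norm a b g := by
  have hölder := integral_mul_le_Lp_mul_Lq_of_nonneg HolderConjugate.two_two
    (Filter.Eventually.of_forall fun y => norm_nonneg (f y))
    (Filter.Eventually.of_forall fun y => norm_nonneg (g y))
    (by simpa using hf.norm) (by simpa using hg.norm)
  simpa only [intervalL2Norm, intervalIntegral.integral_of_le hab, sqrt_eq_rpow, rpow_two]
    using hölder

end IntervalNorms

section IntegrationByParts

variable {E : Type*} [NormedAddCommGroup E] [InnerProductSpace ℝ E] {a b : ℝ} {φ : ℝ → ℝ}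
  {u v : ℝ → E}

theorem integral_deriv_mul_inner_add (hφ : ContDiff ℝ 1 φ) (hu : ContDiff ℝ 1 u)
    (hv : ContDiff ℝ 1 v) :
    ∫ y in a..b, (deriv φ y * ⟪u y, v y⟫_ℝ +
        φ y * (⟪u y, deriv v y⟫_ℝ + ⟪deriv u y, v y⟫_ℝ)) =
      φ b * ⟪u b, v b⟫_ℝ - φ a * ⟪u a, v a⟫_ℝ := by
  have deriv_product (y : ℝ) := (hφ.differentiable one_ne_zero y).hasDerivAt.mul
    ((hu.differentiable one_ne_zero y).hasDerivAt.inner ℝ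
      (hv.differentiable one_ne_zero y).hasDerivAt)
  exact intervalIntegral.integral_eq_sub_of_hasDerivAt (fun y _ => deriv_product y)
    (Continuous.intervalIntegrable (by fun_prop) a b)

theorem integral_deriv_mul_norm_sq_add (hφ : ContDiff ℝ 1 φ) (hu : ContDiff ℝ 1 u)
    (hua : u a = 0) (hub : u b = 0) :
    ∫ y in a..b, (deriv φ y * ‖u y‖ ^ 2 + 2 * φ y * ⟪u y, deriv u y⟫_ℝ) = 0 := by
  calc _ = ∫ y in a..b, (deriv φ y * ⟪u y, u y⟫_ℝ +
          φ y * (⟪u y, deriv u y⟫_ℝ + ⟪deriv u y, u y⟫_ℝ)) := by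
        refine intervalIntegral.integral_congr fun y _ => ?_
        simp only [real_inner_self_eq_norm_sq, real_inner_comm (u y) (deriv u y)]
        ring
    _ = 0 := by
        rw [integral_deriv_mul_inner_add hφ hu hu, hua, hub, inner_zero_left, mul_zero, mul_zero,
          sub_zero]

theorem integral_inner_deriv_deriv_add (hu : ContDiff ℝ 2 u) (hua : u a = 0) (hub : u b = 0) :
    ∫ y in a..b, (⟪u y, deriv (deriv u) y⟫_ℝ + ‖deriv u y‖ ^ 2) = 0 := by
  simpa only [deriv_const', zero_mul, zero_add, one_mul, real_inner_self_eq_norm_sq, hua, hub,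
    inner_zero_left, sub_zero] using
    integral_deriv_mul_inner_add (a := a) (b := b) (contDiff_const (c := (1 : ℝ)))
      (hu.of_le one_le_two) hu.deriv'

theorem inner_I_mul_self (z : ℂ) : ⟪Complex.I * z, z⟫_ℝ = 0 := by
  rw [real_inner_comm]
  exact real_inner_I_smul_self ℂ z

theorem integral_deriv_mul_inner_I_mul_deriv_add {w : ℝ → ℂ} (hφ : ContDiff ℝ 1 φ)
    (hw : ContDiff ℝ 2 w) (hwa : w a = 0) (hwb : w b = 0) :
    ∫ y in a..b, (deriv φ y * ⟪Complex.I * w y, deriv w y⟫_ℝ +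
      φ y * ⟪Complex.I * w y, deriv (deriv w) y⟫_ℝ) = 0 := by
  have hw_one : ContDiff ℝ 1 w := hw.of_le one_le_two
  have deriv_I_mul (y : ℝ) : deriv (fun y => Complex.I * w y) y = Complex.I * deriv w y :=
    deriv_const_mul _ (hw_one.differentiable one_ne_zero y)
  simpa only [deriv_I_mul, inner_I_mul_self, hwa, hwb, mul_zero, inner_zero_left, add_zero,
    sub_zero] using
    integral_deriv_mul_inner_add (a := a) (b := b) hφ
      ((contDiff_const (c := Complex.I)).mul hw_one) hw.deriv'

end IntegrationByParts

theorem le_and_mul_le_of_le_add_of_sq_le {a b ε N H R : ℝ} (hb : 0 < b) (hN_nonneg : 0 ≤ N)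
    (hR_nonneg : 0 ≤ R) (hε : 4 * b ^ 2 * ε ≤ 1) (hN : N ≤ a * R + b * H)
    (hH : H ^ 2 ≤ ε * N ^ 2 + N * R) :
    N ≤ 2 * (a + b ^ 2) * R ∧ b * H ≤ (a + 2 * b ^ 2) * R := by
  have sq_le : (b * H) ^ 2 ≤ (N / 2 + b ^ 2 * R) ^ 2 := by
    calc (b * H) ^ 2 = b ^ 2 * H ^ 2 := mul_pow b H 2
      _ ≤ b ^ 2 * (ε * N ^ 2 + N * R) := by gcongr
      _ = 4 * b ^ 2 * ε * (N ^ 2 / 4) + b ^ 2 * (N * R) := by ring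
      _ ≤ 1 * (N ^ 2 / 4) + b ^ 2 * (N * R) := by gcongr
      _ ≤ 1 * (N ^ 2 / 4) + b ^ 2 * (N * R) + (b ^ 2 * R) ^ 2 :=
        le_add_of_nonneg_right (sq_nonneg _)
      _ = (N / 2 + b ^ 2 * R) ^ 2 := by ring
  have absorbed : b * H ≤ N / 2 + b ^ 2 * R :=
    le_of_abs_le (abs_le_of_sq_le_sq sq_le (by positivity))
  constructor <;> linarith

theorem exists_layer_width {ν x : ℝ} (hν : 0 < ν) (hx : 0 < x) :
    ∃ δ > 0, x * δ ^ 2 * δ ^ 2 = ν ∧ √(ν * x) = x * δ ^ 2 ∧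
      ν ^ ((3 : ℝ) / 4) * x ^ ((1 : ℝ) / 4) = x * δ ^ 2 * δ ∧
      ν ^ ((1 : ℝ) / 2) * x ^ ((1 : ℝ) / 2) = x * δ ^ 2 := by
  obtain ⟨δ, hδ, rfl⟩ : ∃ δ > 0, ν = x * δ ^ 4 :=
    ⟨(ν / x) ^ ((1 : ℝ) / 4), by positivity, by
      rw [← rpow_mul_natCast (by positivity)]
      norm_num [mul_div_cancel₀ ν hx.ne']⟩
  have rpow_split (p : ℝ) : (x * δ ^ 4) ^ p = x ^ p * δ ^ (4 * p) := by
    rw [mul_rpow hx.le (by positivity), ← rpow_natCast, ← rpow_mul hδ.le, Nat.cast_ofNat]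
  refine ⟨δ, hδ, by ring, ?_, ?_, ?_⟩
  · rw [show x * δ ^ 4 * x = (x * δ ^ 2) ^ 2 by ring, sqrt_sq (by positivity)]
  · rw [rpow_split, mul_right_comm, ← rpow_add hx, mul_assoc, ← pow_succ, ← rpow_natCast]
    norm_num
  · rw [rpow_split, mul_right_comm, ← rpow_add hx, ← rpow_natCast]
    norm_num

section ImagSchrodinger

variable {a b h κ γ : ℝ} {V φ ψ : ℝ → ℝ} {w : ℝ → ℂ}

/-- The operator `w ↦ -h(∂² - κ²)w + iVw - γw`. The local Orr–Sommerfeld operator is the case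
`h = ν`, `κ = |k|`, `V = k₁(1 - y² - λ)`, `γ = ε(ν|k₁|)^{1/2}`. -/
def imagSchrodinger (h κ γ : ℝ) (V : ℝ → ℝ) (w : ℝ → ℂ) (y : ℝ) : ℂ :=
  -h * (deriv (deriv w) y - κ ^ 2 * w y) + Complex.I * (V y * w y) - γ * w y

theorem imagSchrodinger_eq_smul (y : ℝ) :
    imagSchrodinger h κ γ V w y =
      (h * κ ^ 2 - γ) • w y + V y • (Complex.I * w y) - h • deriv (deriv w) y := by
  simp only [imagSchrodinger, Complex.real_smul]
  push_cast
  ring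

theorem continuous_imagSchrodinger (hV : Continuous V) (hw : ContDiff ℝ 2 w) :
    Continuous (imagSchrodinger h κ γ V w) := by
  unfold imagSchrodinger
  fun_prop

theorem inner_imagSchrodinger (y : ℝ) :
    ⟪w y, imagSchrodinger h κ γ V w y⟫_ℝ =
      (h * κ ^ 2 - γ) * ‖w y‖ ^ 2 - h * ⟪w y, deriv (deriv w) y⟫_ℝ := by
  rw [imagSchrodinger_eq_smul, inner_sub_right, inner_add_right, real_inner_smul_right,
    real_inner_smul_right, real_inner_smul_right, real_inner_self_eq_norm_sq,
    real_inner_comm, inner_I_mul_self, mul_zero, add_zero]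

theorem inner_I_mul_imagSchrodinger (y : ℝ) :
    ⟪Complex.I * w y, imagSchrodinger h κ γ V w y⟫_ℝ =
      V y * ‖w y‖ ^ 2 - h * ⟪Complex.I * w y, deriv (deriv w) y⟫_ℝ := by
  rw [imagSchrodinger_eq_smul, inner_sub_right, inner_add_right, real_inner_smul_right,
    real_inner_smul_right, real_inner_smul_right, inner_I_mul_self, real_inner_self_eq_norm_sq,
    norm_mul, Complex.norm_I, one_mul, mul_zero, zero_add]

theorem integral_inner_imagSchrodinger (hab : a ≤ b) (hw : ContDiff ℝ 2 w)
    (hwa : w a = 0) (hwb : w b = 0) :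
    ∫ y in a..b, ⟪w y, imagSchrodinger h κ γ V w y⟫_ℝ =
      h * intervalH1Norm a b κ w ^ 2 - γ * intervalL2Norm a b w ^ 2 := by
  have hw'_cont : Continuous (deriv w) := hw.continuous_deriv one_le_two
  calc ∫ y in a..b, ⟪w y, imagSchrodinger h κ γ V w y⟫_ℝ
      = ∫ y in a..b, (h * ‖deriv w y‖ ^ 2 + (h * κ ^ 2 - γ) * ‖w y‖ ^ 2 -
          h * (⟪w y, deriv (deriv w) y⟫_ℝ + ‖deriv w y‖ ^ 2)) := by
        refine intervalIntegral.integral_congr fun y _ => ?_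
        simp only [inner_imagSchrodinger]
        ring
    _ = h * (∫ y in a..b, ‖deriv w y‖ ^ 2) + (h * κ ^ 2 - γ) * ∫ y in a..b, ‖w y‖ ^ 2 := by
        rw [intervalIntegral.integral_sub, intervalIntegral.integral_add,
          intervalIntegral.integral_const_mul, intervalIntegral.integral_const_mul,
          intervalIntegral.integral_const_mul, integral_inner_deriv_deriv_add hw hwa hwb, mul_zero,
          sub_zero]
        all_goals exact Continuous.intervalIntegrable (by fun_prop) a b
    _ = h * intervalH1Norm a b κ w ^ 2 - γ * intervalL2Norm a b w ^ 2 := by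
        rw [intervalH1Norm_sq hab, intervalL2Norm_sq hab, intervalL2Norm_sq hab]
        ring

theorem mul_intervalH1Norm_sq_le (hab : a ≤ b) (hV : Continuous V) (hw : ContDiff ℝ 2 w)
    (hwa : w a = 0) (hwb : w b = 0) :
    h * intervalH1Norm a b κ w ^ 2 ≤ γ * intervalL2Norm a b w ^ 2 +
      intervalL2Norm a b w * intervalL2Norm a b (imagSchrodinger h κ γ V w) := by
  have hL_cont := continuous_imagSchrodinger (h := h) (κ := κ) (γ := γ) hV hw
  have energy := integral_inner_imagSchrodinger (h := h) (κ := κ) (γ := γ) (V := V) hab hw hwa hwb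
  have pairing : ∫ y in a..b, ⟪w y, imagSchrodinger h κ γ V w y⟫_ℝ ≤
      intervalL2Norm a b w * intervalL2Norm a b (imagSchrodinger h κ γ V w) :=
    (intervalIntegral.integral_mono_on hab
      (Continuous.intervalIntegrable (by fun_prop) a b)
      (Continuous.intervalIntegrable (by fun_prop) a b)
      fun y _ => real_inner_le_norm _ _).trans
    (integral_norm_mul_norm_le hab (memLp_two_Ioc_of_continuous hw.continuous)
      (memLp_two_Ioc_of_continuous hL_cont))
  linarith

theorem integral_multiplier_mul_norm_sq (hV : Continuous V) (hφ : ContDiff ℝ 1 φ)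
    (hψ : ContDiff ℝ 1 ψ) (hw : ContDiff ℝ 2 w) (hwa : w a = 0) (hwb : w b = 0) :
    ∫ y in a..b, (V y * φ y + deriv ψ y) * ‖w y‖ ^ 2 =
      ∫ y in a..b, (φ y * ⟪Complex.I * w y, imagSchrodinger h κ γ V w y⟫_ℝ -
        h * deriv φ y * ⟪Complex.I * w y, deriv w y⟫_ℝ - 2 * ψ y * ⟪w y, deriv w y⟫_ℝ) := by
  have hw'_cont : Continuous (deriv w) := hw.continuous_deriv one_le_two
  have hL_cont := continuous_imagSchrodinger (h := h) (κ := κ) (γ := γ) hV hw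
  rw [← sub_eq_zero, ← intervalIntegral.integral_sub]
  · calc _ = ∫ y in a..b, (h * (deriv φ y * ⟪Complex.I * w y, deriv w y⟫_ℝ +
          φ y * ⟪Complex.I * w y, deriv (deriv w) y⟫_ℝ) +
          (deriv ψ y * ‖w y‖ ^ 2 + 2 * ψ y * ⟪w y, deriv w y⟫_ℝ)) := by
          refine intervalIntegral.integral_congr fun y _ => ?_
          simp only [inner_I_mul_imagSchrodinger]
          ring
      _ = 0 := by
          rw [intervalIntegral.integral_add, intervalIntegral.integral_const_mul,
            integral_deriv_mul_inner_I_mul_deriv_add hφ hw hwa hwb,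
            integral_deriv_mul_norm_sq_add hψ (hw.of_le one_le_two) hwa hwb, mul_zero, add_zero]
          all_goals exact Continuous.intervalIntegrable (by fun_prop) a b
  all_goals exact Continuous.intervalIntegrable (by fun_prop) a b

/-- A pair of multipliers giving coercivity `c` for the potential `V` on `s`: testing the equation
against `iφw` produces `∫ Vφ‖w‖²`, and the exact derivative `(ψ‖w‖²)'` compensates where `Vφ` is
small. The bounds `A` and `B` control the forcing and the commutator with `-h∂²`. -/
structure IsMultiplierPair (h c A B : ℝ) (V φ ψ : ℝ → ℝ) (s : Set ℝ) : Prop where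
  contDiff_left : ContDiff ℝ 1 φ
  contDiff_right : ContDiff ℝ 1 ψ
  coercive : ∀ y ∈ s, c ≤ V y * φ y + deriv ψ y
  abs_le : ∀ y ∈ s, |φ y| ≤ A
  commutator_le : ∀ y ∈ s, |h * deriv φ y| + 2 * |ψ y| ≤ B

namespace IsMultiplierPair

variable {c A B : ℝ}

theorem integrand_le {s : Set ℝ} (hm : IsMultiplierPair h c A B V φ ψ s) {y : ℝ} (hy : y ∈ s)
    (z z' G : ℂ) :
    φ y * ⟪Complex.I * z, G⟫_ℝ - h * deriv φ y * ⟪Complex.I * z, z'⟫_ℝ - 2 * ψ y * ⟪z, z'⟫_ℝ ≤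
      A * (‖z‖ * ‖G‖) + B * (‖z‖ * ‖z'‖) := by
  have bound (x X : ℝ) (p q : ℂ) (hx : |x| ≤ X) : |x * ⟪p, q⟫_ℝ| ≤ X * (‖p‖ * ‖q‖) := by
    rw [abs_mul]
    exact mul_le_mul hx (abs_real_inner_le_norm p q) (abs_nonneg _) ((abs_nonneg x).trans hx)
  have forcing := bound (φ y) A (Complex.I * z) G (hm.abs_le y hy)
  have skew := bound (h * deriv φ y) _ (Complex.I * z) z' le_rfl
  have mass := bound (2 * ψ y) _ z z' le_rfl
  have commutator := mul_le_mul_of_nonneg_right (hm.commutator_le y hy)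
    (mul_nonneg (norm_nonneg z) (norm_nonneg z'))
  rw [norm_mul, Complex.norm_I, one_mul] at forcing skew
  rw [abs_mul 2 (ψ y), abs_two] at mass
  linarith [le_abs_self (φ y * ⟪Complex.I * z, G⟫_ℝ),
    neg_abs_le (h * deriv φ y * ⟪Complex.I * z, z'⟫_ℝ), neg_abs_le (2 * ψ y * ⟪z, z'⟫_ℝ)]

theorem mul_intervalL2Norm_sq_le (hm : IsMultiplierPair h c A B V φ ψ (Icc a b)) (hab : a ≤ b)
    (hV : Continuous V) (hw : ContDiff ℝ 2 w) (hwa : w a = 0) (hwb : w b = 0) :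
    c * intervalL2Norm a b w ^ 2 ≤
      A * (∫ y in a..b, ‖w y‖ * ‖imagSchrodinger h κ γ V w y‖) +
      B * ∫ y in a..b, ‖w y‖ * ‖deriv w y‖ := by
  have hw'_cont : Continuous (deriv w) := hw.continuous_deriv one_le_two
  have hL_cont := continuous_imagSchrodinger (h := h) (κ := κ) (γ := γ) hV hw
  have hφ := hm.contDiff_left
  have hψ := hm.contDiff_right
  rw [intervalL2Norm_sq hab, ← intervalIntegral.integral_const_mul]
  calc ∫ y in a..b, c * ‖w y‖ ^ 2 ≤ ∫ y in a..b, (V y * φ y + deriv ψ y) * ‖w y‖ ^ 2 := by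
        refine intervalIntegral.integral_mono_on hab ?_ ?_ fun y hy =>
          mul_le_mul_of_nonneg_right (hm.coercive y hy) (sq_nonneg _)
        all_goals exact Continuous.intervalIntegrable (by fun_prop) a b
    _ = ∫ y in a..b, (φ y * ⟪Complex.I * w y, imagSchrodinger h κ γ V w y⟫_ℝ -
          h * deriv φ y * ⟪Complex.I * w y, deriv w y⟫_ℝ - 2 * ψ y * ⟪w y, deriv w y⟫_ℝ) :=
        integral_multiplier_mul_norm_sq hV hm.contDiff_left hm.contDiff_right hw hwa hwb
    _ ≤ ∫ y in a..b, (A * (‖w y‖ * ‖imagSchrodinger h κ γ V w y‖) +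
          B * (‖w y‖ * ‖deriv w y‖)) := by
        refine intervalIntegral.integral_mono_on hab ?_ ?_ fun y hy => hm.integrand_le hy _ _ _
        all_goals exact Continuous.intervalIntegrable (by fun_prop) a b
    _ = _ := by
        rw [intervalIntegral.integral_add, intervalIntegral.integral_const_mul,
          intervalIntegral.integral_const_mul]
        all_goals exact Continuous.intervalIntegrable (by fun_prop) a b

theorem mul_intervalL2Norm_le (hm : IsMultiplierPair h c A B V φ ψ (Icc a b)) (hab : a ≤ b)
    (hV : Continuous V) (hw : ContDiff ℝ 2 w) (hwa : w a = 0) (hwb : w b = 0) :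
    c * intervalL2Norm a b w ≤
      A * intervalL2Norm a b (imagSchrodinger h κ γ V w) + B * intervalH1Norm a b κ w := by
  set N := intervalL2Norm a b w
  set R := intervalL2Norm a b (imagSchrodinger h κ γ V w)
  have hA : 0 ≤ A := (abs_nonneg _).trans (hm.abs_le a (left_mem_Icc.2 hab))
  have hB : 0 ≤ B := (by positivity : 0 ≤ |h * deriv φ a| + 2 * |ψ a|).trans
    (hm.commutator_le a (left_mem_Icc.2 hab))
  have hw_memLp := memLp_two_Ioc_of_continuous (a := a) (b := b) hw.continuous
  have forcing : ∫ y in a..b, ‖w y‖ * ‖imagSchrodinger h κ γ V w y‖ ≤ N * R :=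
    integral_norm_mul_norm_le hab hw_memLp
      (memLp_two_Ioc_of_continuous (continuous_imagSchrodinger hV hw))
  have commutator : ∫ y in a..b, ‖w y‖ * ‖deriv w y‖ ≤ N * intervalH1Norm a b κ w :=
    (integral_norm_mul_norm_le hab hw_memLp
      (memLp_two_Ioc_of_continuous (hw.continuous_deriv one_le_two))).trans
      (mul_le_mul_of_nonneg_left (intervalL2Norm_deriv_le_intervalH1Norm hab κ w)
        (intervalL2Norm_nonneg w))
  have bound_sq : N * (c * N) ≤ N * (A * R + B * intervalH1Norm a b κ w) := by
    linarith [hm.mul_intervalL2Norm_sq_le (κ := κ) (γ := γ) hab hV hw hwa hwb,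
      mul_le_mul_of_nonneg_left forcing hA, mul_le_mul_of_nonneg_left commutator hB]
  have hN_nonneg : 0 ≤ N := intervalL2Norm_nonneg w
  rcases hN_nonneg.eq_or_lt with hN | hN
  · rw [← hN, mul_zero]
    exact add_nonneg (mul_nonneg hA (intervalL2Norm_nonneg _)) (mul_nonneg hB (sqrt_nonneg _))
  · exact le_of_mul_le_mul_left bound_sq hN

theorem resolvent_estimate {δ ε : ℝ} (hc : 0 < c) (hB : 0 < B)
    (hm : IsMultiplierPair (c * δ ^ 2) c A (B * (c * δ)) V φ ψ (Icc a b))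
    (hε : 4 * B ^ 2 * ε ≤ 1) (hab : a ≤ b) (hV : Continuous V) (hw : ContDiff ℝ 2 w)
    (hwa : w a = 0) (hwb : w b = 0) :
    c * δ * intervalH1Norm a b κ w + c * intervalL2Norm a b w ≤
      (2 * (A + B ^ 2) + (A + 2 * B ^ 2) / B) *
        intervalL2Norm a b (imagSchrodinger (c * δ ^ 2) κ (ε * c) V w) := by
  have multiplier := hm.mul_intervalL2Norm_le (κ := κ) (γ := ε * c) hab hV hw hwa hwb
  have energy := mul_intervalH1Norm_sq_le (h := c * δ ^ 2) (κ := κ) (γ := ε * c) hab hV hw hwa hwb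
  set R := intervalL2Norm a b (imagSchrodinger (c * δ ^ 2) κ (ε * c) V w)
  set N := intervalL2Norm a b w
  set H := intervalH1Norm a b κ w
  have hR : R = c * (R / c) := (mul_div_cancel₀ R hc.ne').symm
  obtain ⟨hN_le, hH_le⟩ := le_and_mul_le_of_le_add_of_sq_le (N := N) (H := δ * H) (R := R / c)
    (a := A) hB (intervalL2Norm_nonneg w) (div_nonneg (intervalL2Norm_nonneg _) hc.le) hε
    (le_of_mul_le_mul_left (by rw [hR] at multiplier; linarith) hc)
    (le_of_mul_le_mul_left (by rw [hR] at energy; linarith) hc)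
  have hH_le' : δ * H ≤ (A + 2 * B ^ 2) / B * (R / c) := by
    rw [div_mul_eq_mul_div, le_div_iff₀ hB]
    linarith
  calc c * δ * H + c * N = c * (δ * H + N) := by ring
    _ ≤ c * ((A + 2 * B ^ 2) / B * (R / c) + 2 * (A + B ^ 2) * (R / c)) := by gcongr
    _ = (2 * (A + B ^ 2) + (A + 2 * B ^ 2) / B) * (c * (R / c)) := by ring
    _ = _ := by rw [← hR]

end IsMultiplierPair

end ImagSchrodinger

section ArctanBounds

theorem abs_arctan_le_pi_div_two (t : ℝ) : |arctan t| ≤ π / 2 :=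
  abs_le.2 ⟨(neg_pi_div_two_lt_arctan t).le, (arctan_lt_pi_div_two t).le⟩

theorem sq_div_one_add_sq_le_mul_arctan (t : ℝ) : t ^ 2 / (1 + t ^ 2) ≤ t * arctan t := by
  have sin_two_mul_arctan : sin (2 * arctan t) = 2 * (t / (1 + t ^ 2)) := by
    rw [sin_two_mul, mul_assoc, sin_arctan, cos_arctan, div_mul_div_comm, mul_one,
      mul_self_sqrt (by positivity)]
  rw [pow_two t, mul_div_assoc, ← pow_two]
  rcases le_total 0 t with ht | ht
  · have sin_le_self := sin_le (mul_nonneg zero_le_two (arctan_nonneg.2 ht))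
    exact mul_le_mul_of_nonneg_left (by linarith) ht
  · have self_le_sin := le_sin (mul_nonpos_of_nonneg_of_nonpos zero_le_two (arctan_le_zero.2 ht))
    exact mul_le_mul_of_nonpos_left (by linarith) ht

theorem one_le_mul_arctan_mul_mul_arctan_add (t s : ℝ) :
    1 ≤ t * arctan t * (s * arctan s) + (1 / (1 + t ^ 2) + 1 / (1 + s ^ 2)) := by
  have lower_bounds := mul_le_mul (sq_div_one_add_sq_le_mul_arctan t)
    (sq_div_one_add_sq_le_mul_arctan s) (by positivity)
    ((by positivity : 0 ≤ t ^ 2 / (1 + t ^ 2)).trans (sq_div_one_add_sq_le_mul_arctan t))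
  calc 1 ≤ 1 + 1 / (1 + t ^ 2) * (1 / (1 + s ^ 2)) := le_add_of_nonneg_right (by positivity)
    _ = t ^ 2 / (1 + t ^ 2) * (s ^ 2 / (1 + s ^ 2)) + (1 / (1 + t ^ 2) + 1 / (1 + s ^ 2)) := by
      field_simp
      ring
    _ ≤ _ := by gcongr

end ArctanBounds

section Poiseuille

variable {δ : ℝ}

/-- A smoothed sign function around `p`, with transition layer of width `δ`. -/
def layerProfile (δ p y : ℝ) : ℝ := arctan ((y - p) / δ)

theorem contDiff_layerProfile (δ p : ℝ) : ContDiff ℝ 1 (layerProfile δ p) :=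
  ((contDiff_id.sub contDiff_const).div_const δ).arctan

theorem abs_layerProfile_le (δ p y : ℝ) : |layerProfile δ p y| ≤ π / 2 :=
  abs_arctan_le_pi_div_two _

theorem mul_deriv_layerProfile (hδ : δ ≠ 0) (p y : ℝ) :
    δ * deriv (layerProfile δ p) y = 1 / (1 + ((y - p) / δ) ^ 2) := by
  have hasDerivAt : HasDerivAt (layerProfile δ p) (1 / (1 + ((y - p) / δ) ^ 2) * (1 / δ)) y :=
    (((hasDerivAt_id y).sub_const p).div_const δ).arctan
  rw [hasDerivAt.deriv, mul_left_comm, mul_one_div_cancel hδ, mul_one]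

theorem abs_mul_deriv_layerProfile_le (hδ : δ ≠ 0) (p y : ℝ) :
    |δ * deriv (layerProfile δ p) y| ≤ 1 := by
  rw [mul_deriv_layerProfile hδ, abs_of_nonneg (by positivity)]
  exact div_le_one_of_le₀ (le_add_of_nonneg_right (sq_nonneg _)) (by positivity)

/-- The turning point `y ≥ 0` with `1 - y² = λ`. For `λ > 1` there is none, and `Real.sqrt` returns
the channel centre `0`, where `|1 - y² - λ|` is smallest. -/
def turningPoint (lam : ℝ) : ℝ := √(1 - lam)

/-- The factor `φ` of the multiplier `iφw`: a smoothed sign of `α(1 - y² - λ)`, changing sign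
across layers of width `δ` at the turning points. -/
def poiseuilleSkewMultiplier (α δ lam y : ℝ) : ℝ :=
  -SignType.sign α *
    (layerProfile δ (turningPoint lam) y * layerProfile δ (-turningPoint lam) y)

/-- The weight `ψ` whose derivative is concentrated in the layers of width `δ` at the turning
points, where `poiseuilleSkewMultiplier` gives no control. -/
def poiseuilleLayerWeight (α δ lam y : ℝ) : ℝ :=
  |α| * δ ^ 2 * δ *
    (layerProfile δ (turningPoint lam) y + layerProfile δ (-turningPoint lam) y)

theorem mul_turning_layers_le (hδ : δ ≠ 0) (lam y : ℝ) :
    δ ^ 2 * ((y - turningPoint lam) / δ * layerProfile δ (turningPoint lam) y *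
        ((y - -turningPoint lam) / δ * layerProfile δ (-turningPoint lam) y)) ≤
      (y ^ 2 - (1 - lam)) *
        (layerProfile δ (turningPoint lam) y * layerProfile δ (-turningPoint lam) y) := by
  have factor (p P Q : ℝ) : δ ^ 2 * ((y - p) / δ * P * ((y - -p) / δ * Q)) =
      (y ^ 2 - p ^ 2) * (P * Q) := by
    field_simp
    ring
  rw [factor]
  rcases le_total 0 (1 - lam) with hlam | hlam
  · rw [turningPoint, sq_sqrt hlam]
  · rw [turningPoint, sqrt_eq_zero_of_nonpos hlam, neg_zero]
    exact mul_le_mul_of_nonneg_right (by linarith) (mul_self_nonneg _)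

theorem poiseuille_coercive (hδ : δ ≠ 0) (α lam y : ℝ) :
    |α| * δ ^ 2 ≤ α * (1 - y ^ 2 - lam) * poiseuilleSkewMultiplier α δ lam y +
      deriv (poiseuilleLayerWeight α δ lam) y := by
  set p := turningPoint lam
  have deriv_weight : deriv (poiseuilleLayerWeight α δ lam) y =
      |α| * δ ^ 2 * (1 / (1 + ((y - p) / δ) ^ 2) + 1 / (1 + ((y - -p) / δ) ^ 2)) := by
    have differentiable (q : ℝ) : DifferentiableAt ℝ (layerProfile δ q) y :=
      (contDiff_layerProfile δ q).differentiable one_ne_zero y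
    rw [← mul_deriv_layerProfile hδ, ← mul_deriv_layerProfile hδ, ← mul_add, ← mul_assoc,
      ← deriv_add (differentiable p) (differentiable (-p))]
    exact deriv_const_mul _ ((differentiable p).add (differentiable (-p)))
  calc |α| * δ ^ 2
      ≤ |α| * δ ^ 2 * ((y - p) / δ * layerProfile δ p y * ((y - -p) / δ * layerProfile δ (-p) y) +
          (1 / (1 + ((y - p) / δ) ^ 2) + 1 / (1 + ((y - -p) / δ) ^ 2))) :=
        le_mul_of_one_le_right (by positivity) (one_le_mul_arctan_mul_mul_arctan_add _ _)
    _ ≤ |α| * ((y ^ 2 - (1 - lam)) * (layerProfile δ p y * layerProfile δ (-p) y)) +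
          deriv (poiseuilleLayerWeight α δ lam) y := by
        rw [deriv_weight, mul_add, mul_assoc |α| (δ ^ 2)]
        exact add_le_add_left
          (mul_le_mul_of_nonneg_left (mul_turning_layers_le hδ lam y) (abs_nonneg α)) _
    _ = _ := by
        rw [← self_mul_sign α, poiseuilleSkewMultiplier]
        ring

theorem abs_sign_le_one (α : ℝ) : |(SignType.sign α : ℝ)| ≤ 1 := by
  cases SignType.sign α <;> simp

theorem abs_poiseuilleSkewMultiplier_le (α δ lam y : ℝ) :
    |poiseuilleSkewMultiplier α δ lam y| ≤ π ^ 2 / 4 := by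
  rw [poiseuilleSkewMultiplier, abs_mul, abs_mul, abs_neg]
  calc _ ≤ 1 * (π / 2 * (π / 2)) := by
        gcongr
        · exact abs_sign_le_one α
        · exact abs_layerProfile_le _ _ _
        · exact abs_layerProfile_le _ _ _
    _ = π ^ 2 / 4 := by ring

theorem abs_poiseuilleLayerWeight_le (hδ : 0 ≤ δ) (α lam y : ℝ) :
    |poiseuilleLayerWeight α δ lam y| ≤ |α| * δ ^ 2 * δ * π := by
  rw [poiseuilleLayerWeight, abs_mul, abs_of_nonneg (by positivity)]
  gcongr
  exact (abs_add_le _ _).trans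
    ((add_le_add (abs_layerProfile_le _ _ _) (abs_layerProfile_le _ _ _)).trans_eq (add_halves π))

theorem abs_mul_deriv_poiseuilleSkewMultiplier_le (hδ : δ ≠ 0) (α lam y : ℝ) :
    |δ * deriv (poiseuilleSkewMultiplier α δ lam) y| ≤ π := by
  set p := turningPoint lam
  have differentiable (q : ℝ) : DifferentiableAt ℝ (layerProfile δ q) y :=
    (contDiff_layerProfile δ q).differentiable one_ne_zero y
  have deriv_eq : δ * deriv (poiseuilleSkewMultiplier α δ lam) y = -SignType.sign α *
      (δ * deriv (layerProfile δ p) y * layerProfile δ (-p) y +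
        layerProfile δ p y * (δ * deriv (layerProfile δ (-p)) y)) := by
    have product_rule := ((differentiable p).hasDerivAt.mul
      (differentiable (-p)).hasDerivAt).const_mul (-SignType.sign α : ℝ)
    rw [(show deriv (poiseuilleSkewMultiplier α δ lam) y = _ from product_rule.deriv)]
    ring
  rw [deriv_eq, abs_mul, abs_neg]
  calc _ ≤ 1 * (1 * (π / 2) + π / 2 * 1) := by
        refine mul_le_mul (abs_sign_le_one α) ((abs_add_le _ _).trans ?_) (abs_nonneg _) zero_le_one
        rw [abs_mul (_ * _) (layerProfile δ _ y), abs_mul (layerProfile δ _ y)]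
        gcongr
        · exact abs_mul_deriv_layerProfile_le hδ _ _
        · exact abs_layerProfile_le _ _ _
        · exact abs_layerProfile_le _ _ _
        · exact abs_mul_deriv_layerProfile_le hδ _ _
    _ = π := by ring

theorem poiseuille_commutator_le (hδ : 0 < δ) (α lam y : ℝ) :
    |(|α| * δ ^ 2 * δ ^ 2) * deriv (poiseuilleSkewMultiplier α δ lam) y| +
      2 * |poiseuilleLayerWeight α δ lam y| ≤ 3 * π * (|α| * δ ^ 2 * δ) := by
  have skew : |(|α| * δ ^ 2 * δ ^ 2) * deriv (poiseuilleSkewMultiplier α δ lam) y| ≤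
      |α| * δ ^ 2 * δ * π := by
    calc _ = |α| * δ ^ 2 * δ * |δ * deriv (poiseuilleSkewMultiplier α δ lam) y| := by
          rw [pow_two δ, ← mul_assoc, mul_assoc _ δ (deriv _ y), abs_mul,
            abs_of_nonneg (by positivity)]
      _ ≤ |α| * δ ^ 2 * δ * π := by
          gcongr
          exact abs_mul_deriv_poiseuilleSkewMultiplier_le hδ.ne' α lam y
  linarith [abs_poiseuilleLayerWeight_le hδ.le α lam y]

theorem isMultiplierPair_poiseuille (hδ : 0 < δ) (α lam : ℝ) (s : Set ℝ) :
    IsMultiplierPair (|α| * δ ^ 2 * δ ^ 2) (|α| * δ ^ 2) 3 (10 * (|α| * δ ^ 2 * δ))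
      (fun y => α * (1 - y ^ 2 - lam)) (poiseuilleSkewMultiplier α δ lam)
      (poiseuilleLayerWeight α δ lam) s where
  contDiff_left := contDiff_const.mul
    ((contDiff_layerProfile δ _).mul (contDiff_layerProfile δ _))
  contDiff_right := contDiff_const.mul
    ((contDiff_layerProfile δ _).add (contDiff_layerProfile δ _))
  coercive y _ := poiseuille_coercive hδ.ne' α lam y
  abs_le y _ := (abs_poiseuilleSkewMultiplier_le α δ lam y).trans
    (by nlinarith [pi_lt_d2, pi_pos])
  commutator_le y _ := (poiseuille_commutator_le hδ α lam y).trans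
    (mul_le_mul_of_nonneg_right (by linarith [pi_lt_d2]) (by positivity))

end Poiseuille

theorem OS_local_resolvent_L2_general {a b ν ε κ α lam : ℝ} {w F : ℝ → ℂ} (hab : a ≤ b)
    (hν : 0 < ν) (hε : ε ≤ 1 / 400) (hα : α ≠ 0) (hw : ContDiff ℝ 2 w)
    (hF : EqOn (imagSchrodinger ν κ (ε * √(ν * |α|)) (fun y => α * (1 - y ^ 2 - lam)) w) F
      (Icc a b))
    (hwa : w a = 0) (hwb : w b = 0) :
    ν ^ ((3 : ℝ) / 4) * |α| ^ ((1 : ℝ) / 4) * intervalH1Norm a b κ w +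
        ν ^ ((1 : ℝ) / 2) * |α| ^ ((1 : ℝ) / 2) * intervalL2Norm a b w ≤
      227 * intervalL2Norm a b F := by
  have hα_pos : 0 < |α| := abs_pos.2 hα
  obtain ⟨δ, hδ, hν_eq, hsqrt, hthree_fourths, hhalf⟩ := exists_layer_width hν hα_pos
  rw [← intervalL2Norm_congr hab hF, hthree_fourths, hhalf, hsqrt, ← hν_eq]
  refine ((isMultiplierPair_poiseuille hδ α lam (Icc a b)).resolvent_estimate (ε := ε)
    (by positivity) (by norm_num) (by linarith) hab (by fun_prop) hw hwa hwb).trans ?_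
  exact mul_le_mul_of_nonneg_right (by norm_num) (intervalL2Norm_nonneg _)

theorem OSlocal.eqOn_imagSchrodinger {ν ε lam : ℝ} {k₁ k₃ : ℤ} {w F : ℝ → ℂ}
    (h : OSlocal ν k₁ k₃ lam ε w F) :
    EqOn (imagSchrodinger ν (kabs k₁ k₃) (ε * √(ν * |(k₁ : ℝ)|))
      (fun y => k₁ * (1 - y ^ 2 - lam)) w) F (Icc (-1) 1) := by
  intro y hy
  rw [← h.2.1 y hy, imagSchrodinger]
  push_cast
  ring

/-- **Resolvent estimate for the Orr–Sommerfeld equation without nonlocal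
term, `F₁ ∈ L²`** (Proposition 2.16):
`ν^{3/4}|k₁|^{1/4}‖(∂_y,|k|)w‖_{L²} + ν^{1/2}|k₁|^{1/2}‖w‖_{L²} ≤ C‖F₁‖_{L²}`. -/
theorem OS_local_resolvent_L2 :
    ∃ ε₀ ν₀ C : ℝ, 0 < ε₀ ∧ ε₀ < 1 ∧ 0 < ν₀ ∧ ν₀ < 1 ∧ 0 < C ∧
      ∀ (ν ε lam : ℝ) (k₁ k₃ : ℤ) (w F₁ : ℝ → ℂ),
        0 < ν → ν ≤ ν₀ → 0 ≤ ε → ε ≤ ε₀ → 1 ≤ |k₁| →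
        IntervalIntegrable (fun y => ‖F₁ y‖ ^ 2) MeasureTheory.volume (-1) 1 →
        OSlocal ν k₁ k₃ lam ε w F₁ →
        ν ^ ((3:ℝ)/4) * |(k₁ : ℝ)| ^ ((1:ℝ)/4) * hk k₁ k₃ w
          + ν ^ ((1:ℝ)/2) * |(k₁ : ℝ)| ^ ((1:ℝ)/2) * l2 w
          ≤ C * l2 F₁ := by
  refine ⟨1 / 400, 1 / 2, 227, by norm_num, by norm_num, by norm_num, by norm_num, by norm_num, ?_⟩
  intro ν ε lam k₁ k₃ w F₁ hν _ _ hε hk₁ _ hOS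
  exact OS_local_resolvent_L2_general (by norm_num) hν hε
    (Int.cast_ne_zero.2 (abs_pos.1 (one_pos.trans_le hk₁))) hOS.1 hOS.eqOn_imagSchrodinger
    hOS.2.2.1 hOS.2.2.2

end
end
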